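/- arXiv:2010.14010 — 8 statements merged into one kernel-verified Lean document; each statement's English description precedes it below -/
import Mathlib

section
/- Let X be a random vector on a probability space and let P be a σ(X)-measurable random variable with values in [0,∞). Then P is a p-variable if and only if there exists a σ(X)-measurable random variable T such that P ≥ ℙ(T' ≤ T | X) almost surely, where T' is a random variable identically distributed as T and independent of X. -/
open MeasureTheory ProbabilityTheory

/-- `P` is a p-variable for the null hypothesis `{μ}`: `ℙ(P ≤ α) ≤ α` for all `α ∈ (0,1)`. -/
def IsPVar {Ω : Type*} [MeasurableSpace Ω] (μ : Measure Ω) (P : Ω → ℝ) : Prop :=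
  ∀ α ∈ Set.Ioo (0:ℝ) 1, μ {ω | P ω ≤ α} ≤ ENNReal.ofReal α

/-!
Let `F` be the distribution function of `T`. Freezing the `σ(X)`-measurable `T` and integrating out
the independent copy `T'` gives `ℙ(T' ≤ T | X) = F(T)`, and `F(T)` is always a p-variable.
Conversely, a p-variable `P` is almost surely positive and its distribution function `F` satisfies
`F(x) ≤ x` for `x ≥ 0`; hence `F(P) ≤ P`, and `T = P` works, with `T'` a quantile transform of a
uniform variable independent of `X`.
-/

section Freezing

variable {Ω E F : Type*} {m mΩ : MeasurableSpace Ω} [MeasurableSpace E] [MeasurableSpace F]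
  {μ : Measure Ω} [IsFiniteMeasure μ] {T : Ω → E} {Y : Ω → F}

lemma map_restrict_prodMk_eq_prod_of_indep (hm : m ≤ mΩ) (hT : Measurable[m] T)
    (hY : Measurable Y) (hind : Indep (MeasurableSpace.comap Y inferInstance) m μ) {s : Set Ω}
    (hs : MeasurableSet[m] s) :
    (μ.restrict s).map (fun ω => (T ω, Y ω)) = ((μ.restrict s).map T).prod (μ.map Y) := by
  have hTm : Measurable T := hT.mono hm le_rfl
  refine (Measure.prod_eq fun A B hA hB => ?_).symm
  rw [Measure.map_apply (hTm.prodMk hY) (hA.prod hB), Measure.map_apply hTm hA,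
    Measure.map_apply hY hB, Measure.restrict_apply (hTm.prodMk hY (hA.prod hB)),
    Measure.restrict_apply (hTm hA), mul_comm,
    ← (Indep_iff _ _ _).1 hind _ _ ⟨B, hB, rfl⟩ ((hT hA).inter hs)]
  congr 1
  grind

theorem condExp_prodMk_ae_eq_integral_map_of_indep {G : Type*} [NormedAddCommGroup G]
    [NormedSpace ℝ G] [CompleteSpace G] (hm : m ≤ mΩ) (hT : Measurable[m] T) (hY : Measurable Y)
    (hind : Indep (MeasurableSpace.comap Y inferInstance) m μ) {f : E × F → G}
    (hf : StronglyMeasurable f) (hfi : Integrable (fun ω => f (T ω, Y ω)) μ) :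
    μ[fun ω => f (T ω, Y ω) | m] =ᵐ[μ] fun ω => ∫ y, f (T ω, y) ∂μ.map Y := by
  have hTm : Measurable T := hT.mono hm le_rfl
  have hTY : Measurable fun ω => (T ω, Y ω) := hTm.prodMk hY
  have hg : StronglyMeasurable fun x => ∫ y, f (x, y) ∂μ.map Y := hf.integral_prod_right'
  have hprod : ∀ s, MeasurableSet[m] s →
      Integrable f (((μ.restrict s).map T).prod (μ.map Y)) := fun s hs => by
    rw [← map_restrict_prodMk_eq_prod_of_indep hm hT hY hind hs,
      integrable_map_measure hf.aestronglyMeasurable hTY.aemeasurable]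
    exact hfi.restrict
  refine (ae_eq_condExp_of_forall_setIntegral_eq hm hfi (fun s hs _ => ?_) (fun s hs _ => ?_)
    (hg.comp_measurable hT).aestronglyMeasurable).symm
  · exact (hprod s hs).integral_prod_left.comp_measurable hTm
  · calc ∫ ω in s, ∫ y, f (T ω, y) ∂μ.map Y ∂μ
        = ∫ x, ∫ y, f (x, y) ∂μ.map Y ∂(μ.restrict s).map T :=
          (integral_map hTm.aemeasurable hg.aestronglyMeasurable).symm
      _ = ∫ p, f p ∂((μ.restrict s).map T).prod (μ.map Y) := (integral_prod f (hprod s hs)).symm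
      _ = ∫ p, f p ∂(μ.restrict s).map fun ω => (T ω, Y ω) := by
          rw [map_restrict_prodMk_eq_prod_of_indep hm hT hY hind hs]
      _ = ∫ ω in s, f (T ω, Y ω) ∂μ :=
          integral_map hTY.aemeasurable hf.aestronglyMeasurable

end Freezing

lemma measure_setOf_measure_Iic_le_le {α : Type*} [LinearOrder α] [TopologicalSpace α]
    [OrderClosedTopology α] [MeasurableSpace α] [BorelSpace α]
    (ν : Measure α) [ν.InnerRegular] (a : ENNReal) :
    ν {x | ν (Set.Iic x) ≤ a} ≤ a := by
  have hmono : Monotone fun x => ν (Set.Iic x) := fun x y hxy =>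
    measure_mono (Set.Iic_subset_Iic.2 hxy)
  refine le_of_forall_lt fun r hr => ?_
  -- The supremum of the set need not belong to it; inner regularity leaves a compact subset, whose
  -- maximum does.
  obtain ⟨K, hKsub, hK, hrK⟩ :=
    (measurableSet_le hmono.measurable measurable_const).exists_lt_isCompact hr
  have hne : K.Nonempty := nonempty_of_measure_ne_zero (ne_bot_of_gt hrK)
  obtain ⟨x, hxK, hx⟩ := hK.exists_isGreatest hne
  calc r < ν K := hrK
    _ ≤ ν (Set.Iic x) := measure_mono hx
    _ ≤ a := hKsub hxK

lemma exists_measurable_map_restrict_Icc_eq {α : Type*} [MeasurableSpace α]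
    [StandardBorelSpace α] (ν : Measure α) [IsProbabilityMeasure ν] :
    ∃ f : ℝ → α, Measurable f ∧ (volume.restrict (Set.Icc (0 : ℝ) 1)).map f = ν := by
  have : Nonempty α := ν.nonempty_of_neZero
  obtain ⟨f, hf, hfν⟩ := ν.exists_measurable_map_eq
  have hfproj : Measurable (f ∘ Set.projIcc (0 : ℝ) 1 zero_le_one) :=
    hf.comp continuous_projIcc.measurable
  have hproj : Set.projIcc (0 : ℝ) 1 zero_le_one ∘ Subtype.val = id :=
    funext (Set.projIcc_val zero_le_one)
  refine ⟨_, hfproj, ?_⟩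
  rw [← unitInterval.measurePreserving_coe.map_eq, Measure.map_map hfproj measurable_subtype_coe,
    Function.comp_assoc, hproj, Function.comp_id, hfν]

lemma exists_map_eq_indep_of_uniform {Ω α : Type*} {m mΩ : MeasurableSpace Ω} [MeasurableSpace α]
    [StandardBorelSpace α] {μ : Measure Ω} {V : Ω → ℝ} (hV : Measurable V)
    (hVmap : μ.map V = volume.restrict (Set.Icc (0 : ℝ) 1))
    (hVind : Indep (MeasurableSpace.comap V inferInstance) m μ)
    (ν : Measure α) [IsProbabilityMeasure ν] :
    ∃ Y : Ω → α, Measurable Y ∧ μ.map Y = ν ∧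
      Indep (MeasurableSpace.comap Y inferInstance) m μ := by
  obtain ⟨f, hf, hfν⟩ := exists_measurable_map_restrict_Icc_eq ν
  refine ⟨f ∘ V, hf.comp hV, ?_, indep_of_indep_of_le_left hVind ?_⟩
  · rw [← Measure.map_map hf hV, hVmap, hfν]
  · exact (hf.comp (comap_measurable V)).comap_le

section PVar

variable {Ω : Type*} {m mΩ : MeasurableSpace Ω} {μ : Measure Ω} {P Q : Ω → ℝ}

lemma IsPVar.mono_ae (hP : IsPVar μ P) (hPQ : P ≤ᵐ[μ] Q) : IsPVar μ Q := fun α hα =>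
  (measure_mono_ae (hPQ.mono fun _ hω hQ => hω.trans hQ)).trans (hP α hα)

variable [IsProbabilityMeasure μ] {T T' : Ω → ℝ}

lemma IsPVar.measure_le_ofReal (hP : IsPVar μ P) {x : ℝ} (hx : 0 ≤ x) :
    μ {ω | P ω ≤ x} ≤ ENNReal.ofReal x := by
  have hlim : Filter.Tendsto ENNReal.ofReal (nhdsWithin x (Set.Ioi x)) (nhds (ENNReal.ofReal x)) :=
    ENNReal.continuous_ofReal.continuousWithinAt
  refine ge_of_tendsto hlim ?_
  filter_upwards [self_mem_nhdsWithin] with α (hα : x < α)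
  rcases lt_or_ge α 1 with hα1 | hα1
  · exact (measure_mono fun ω hω => le_trans hω hα.le).trans (hP α ⟨hx.trans_lt hα, hα1⟩)
  · exact prob_le_one.trans (ENNReal.one_le_ofReal.2 hα1)

lemma IsPVar.ae_pos (hP : IsPVar μ P) : ∀ᵐ ω ∂μ, 0 < P ω := by
  simpa [ae_iff] using hP.measure_le_ofReal le_rfl

lemma IsPVar.cdf_map_le (hP : IsPVar μ P) (hPm : AEMeasurable P μ) {x : ℝ} (hx : 0 ≤ x) :
    cdf (μ.map P) x ≤ x := by
  have := Measure.isProbabilityMeasure_map hPm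
  rw [← ENNReal.ofReal_le_ofReal_iff hx, ofReal_cdf,
    Measure.map_apply_of_aemeasurable hPm measurableSet_Iic]
  exact hP.measure_le_ofReal hx

theorem isPVar_cdf_map (hT : AEMeasurable T μ) : IsPVar μ fun ω => cdf (μ.map T) (T ω) := by
  have := Measure.isProbabilityMeasure_map hT
  intro α hα
  have hset : {x | cdf (μ.map T) x ≤ α} = {x | μ.map T (Set.Iic x) ≤ ENNReal.ofReal α} := by
    simp only [← ofReal_cdf, ENNReal.ofReal_le_ofReal_iff hα.1.le]
  calc μ {ω | cdf (μ.map T) (T ω) ≤ α}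
      = μ.map T {x | cdf (μ.map T) x ≤ α} :=
        (Measure.map_apply_of_aemeasurable hT
          (measurableSet_le (monotone_cdf _).measurable measurable_const)).symm
    _ ≤ ENNReal.ofReal α := hset ▸ measure_setOf_measure_Iic_le_le _ _

theorem isPVar_iff_cdf_map_ae_le (hP : AEMeasurable P μ) :
    IsPVar μ P ↔ ∀ᵐ ω ∂μ, cdf (μ.map P) (P ω) ≤ P ω :=
  ⟨fun hPVar => hPVar.ae_pos.mono fun _ hω => hPVar.cdf_map_le hP hω.le,
    (isPVar_cdf_map hP).mono_ae⟩

theorem condExp_indicator_le_ae_eq_cdf (hm : m ≤ mΩ) (hT : Measurable[m] T)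
    (hT' : Measurable T') (hind : Indep (MeasurableSpace.comap T' inferInstance) m μ) :
    μ[Set.indicator {ω | T' ω ≤ T ω} (fun _ => (1 : ℝ)) | m] =ᵐ[μ]
      fun ω => cdf (μ.map T') (T ω) := by
  have := Measure.isProbabilityMeasure_map (μ := μ) hT'.aemeasurable
  have hs : MeasurableSet {p : ℝ × ℝ | p.2 ≤ p.1} := measurableSet_le measurable_snd measurable_fst
  have hTT' : Measurable fun ω => (T ω, T' ω) := (hT.mono hm le_rfl).prodMk hT'
  refine (condExp_prodMk_ae_eq_integral_map_of_indep hm hT hT' hind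
    (f := Set.indicator {p : ℝ × ℝ | p.2 ≤ p.1} fun _ => (1 : ℝ))
    (stronglyMeasurable_const.indicator hs)
    ((integrable_const (1 : ℝ)).indicator (hTT' hs))).trans (.of_eq ?_)
  ext ω
  rw [cdf_eq_real]
  exact integral_indicator_one (measurableSet_Iic (a := T ω))

theorem pVar_iff_exists_condProb_le_general (hm : m ≤ mΩ) {V : Ω → ℝ} (hV : Measurable V)
    (hVmap : μ.map V = volume.restrict (Set.Icc (0 : ℝ) 1))
    (hVind : Indep (MeasurableSpace.comap V inferInstance) m μ) (hP : Measurable[m] P) :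
    IsPVar μ P ↔
      ∃ T T' : Ω → ℝ,
        Measurable[m] T ∧ Measurable T' ∧ IdentDistrib T' T μ μ ∧
        Indep (MeasurableSpace.comap T' inferInstance) m μ ∧
        ∀ᵐ ω ∂μ, (μ[Set.indicator {ω' | T' ω' ≤ T ω'} (fun _ => (1 : ℝ)) | m]) ω ≤ P ω := by
  have hPm : AEMeasurable P μ := (hP.mono hm le_rfl).aemeasurable
  constructor
  · intro hPVar
    have := Measure.isProbabilityMeasure_map hPm
    obtain ⟨T', hT', hT'map, hT'ind⟩ := exists_map_eq_indep_of_uniform hV hVmap hVind (μ.map P)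
    refine ⟨P, T', hP, hT', ⟨hT'.aemeasurable, hPm, hT'map⟩, hT'ind, ?_⟩
    have hcondExp := condExp_indicator_le_ae_eq_cdf hm hP hT' hT'ind
    rw [hT'map] at hcondExp
    exact hcondExp.trans_le ((isPVar_iff_cdf_map_ae_le hPm).1 hPVar)
  · rintro ⟨T, T', hT, hT', hTT', hT'ind, hle⟩
    have hcondExp := condExp_indicator_le_ae_eq_cdf hm hT hT' hT'ind
    rw [hTT'.map_eq] at hcondExp
    exact (isPVar_cdf_map hTT'.aemeasurable_snd).mono_ae (hcondExp.symm.trans_le hle)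

end PVar

/-- **Theorem (probabilistic interpretation of p-values).**
Let `X` be a random vector and `P` a nonnegative `σ(X)`-measurable random variable, on a
probability space rich enough to support a uniform random variable independent of any given
random vector.  Then `P` is a p-variable if and only if there are `T`, `T'` with `T`
`σ(X)`-measurable, `T'` identically distributed as `T` and independent of `X`, such that
`P ≥ ℙ(T' ≤ T | X)` almost surely. -/
theorem pVar_iff_exists_condProb_le
    {Ω E : Type*} [MeasurableSpace Ω] [MeasurableSpace E]
    (μ : Measure Ω) [IsProbabilityMeasure μ]
    (X : Ω → E) (hX : Measurable X)
    (hrich : ∀ Y : Ω → ℝ × E, Measurable Y →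
      ∃ V : Ω → ℝ, Measurable V ∧ μ.map V = volume.restrict (Set.Icc (0:ℝ) 1) ∧
        IndepFun V Y μ)
    (P : Ω → ℝ) (hP : Measurable[MeasurableSpace.comap X inferInstance] P)
    (hP0 : ∀ ω, 0 ≤ P ω) :
    IsPVar μ P ↔
      ∃ T T' : Ω → ℝ,
        Measurable[MeasurableSpace.comap X inferInstance] T ∧ Measurable T' ∧
        IdentDistrib T' T μ μ ∧ IndepFun T' X μ ∧
        ∀ᵐ ω ∂μ,
          (μ[Set.indicator {ω' | T' ω' ≤ T ω'} (fun _ => (1:ℝ)) |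
              MeasurableSpace.comap X inferInstance]) ω ≤ P ω := by
  obtain ⟨V, hV, hVmap, hVind⟩ := hrich (fun ω => (0, X ω)) (measurable_const.prodMk hX)
  exact pVar_iff_exists_condProb_le_general hX.comap_le hV hVmap
    (hVind.comp measurable_id measurable_snd : IndepFun V X μ) hP
end

section
/- Let X be a random vector on a probability space and let P be a σ(X)-measurable random variable with values in [0,∞). Then P is a p*-variable if and only if there exists a random variable T (not necessarily σ(X)-measurable) such that P ≥ ℙ(T' ≤ T | X) almost surely, where T' is a random variable identically distributed as T and independent of the pair (T, X). -/
open MeasureTheory ProbabilityTheory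

/-- `P` is a p*-variable: `E[f(U)] ≤ E[f(P)]` for every increasing concave `f : ℝ → ℝ` for
which both expectations exist, where `U` is uniform on `[0,1]` (i.e. `U ≤₂ P`). -/
def IsPStarVar {Ω : Type*} [MeasurableSpace Ω] (μ : Measure Ω) (P : Ω → ℝ) : Prop :=
  ∀ f : ℝ → ℝ, Monotone f → ConcaveOn ℝ Set.univ f →
    IntervalIntegrable f volume 0 1 → Integrable (fun ω => f (P ω)) μ →
    ∫ u in (0:ℝ)..1, f u ≤ ∫ ω, f (P ω) ∂μ

/-!
Write `G` for the distribution function of `T` and `U` for a uniform variable. Conditioning first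
on `(T, X)` gives `ℙ(T' ≤ T | X) = E[G(T) | X]`. Since `G` composed with the quantile function
dominates the identity, `E[f(U)] ≤ E[f(G(T))]` for increasing `f`; if moreover `f` is concave, then
`E[f(G(T))] ≤ E[f(E[G(T) | X])] ≤ E[f(P)]` by Jensen's inequality.

Conversely, if `P` is a p*-variable then `U` lies below `min(P, 1)` in the increasing concave
order. As in Strassen's theorem, this provides a Markov kernel sending the law of `min(P, 1)` to
that of `U` whose conditional means lie below the identity. Sampling from it at `min(P, 1)` with
randomness independent of `X` yields a uniform `T` with `E[T | X] ≤ P`, and `G(T) = T`.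

The kernel is constructed by exchanging mass. Let `a` and `b` be the quantile functions of the
smaller and the larger law. By the order, the surplus `(b - a)⁺` accumulates earlier than the
deficit `(a - b)⁺`, so the deficit at any `y` can be matched with surplus at points `x ≤ y`, where
`a x < b x ≤ b y < a y`. Exchanging `x` and `y` on a mass `1 / (a y - a x)` moves one unit of `a`
from `y` to `x`; doing this for all matched pairs pulls the mean of `a` below `b`.
-/

section

open Set Filter Topology
open scoped ENNReal

/-- The lower quantile function of a measure `ν` of total mass `M`: the left-continuous inverse
of `t ↦ ν (-∞, t]`, a function on `(0, M)`. It is set to `0` off `(0, M)`, where the infimum can be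
a junk value. -/
noncomputable def quantile (ν : Measure ℝ) : ℝ → ℝ :=
  (Ioo 0 (ν.real univ)).indicator fun x => sInf {t | x ≤ ν.real (Iic t)}

section Quantile

variable (ν : Measure ℝ) [IsFiniteMeasure ν]

lemma monotone_measureReal_Iic : Monotone fun t => ν.real (Iic t) :=
  fun _ _ hst => measureReal_mono (Iic_subset_Iic.2 hst)

lemma tendsto_measureReal_Iic_atBot : Tendsto (fun t => ν.real (Iic t)) atBot (𝓝 0) := by
  have hempty : ⋂ t : ℝ, Iic t = ∅ :=
    eq_empty_of_forall_notMem fun x hx => (sub_one_lt x).not_ge (mem_iInter.1 hx (x - 1))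
  have h : Tendsto (fun t => ν (Iic t)) atBot (𝓝 (ν (⋂ t, Iic t))) :=
    tendsto_measure_iInter_atBot (fun _ => measurableSet_Iic.nullMeasurableSet)
      (fun _ _ hst => Iic_subset_Iic.2 hst) ⟨0, measure_ne_top _ _⟩
  rw [hempty, measure_empty] at h
  exact (ENNReal.tendsto_toReal ENNReal.zero_ne_top).comp h

lemma tendsto_measureReal_Iic_atTop :
    Tendsto (fun t => ν.real (Iic t)) atTop (𝓝 (ν.real univ)) :=
  (ENNReal.tendsto_toReal (measure_ne_top ν univ)).comp (tendsto_measure_Iic_atTop ν)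

lemma tendsto_measureReal_Iic_nhdsGT (t : ℝ) :
    Tendsto (fun s => ν.real (Iic s)) (𝓝[>] t) (𝓝 (ν.real (Iic t))) := by
  have hinter : ⋂ s > t, Iic s = Iic t := by
    ext x
    simpa only [mem_iInter, mem_Iic] using forall_gt_imp_ge_iff_le_of_dense
  have h : Tendsto (fun s => ν (Iic s)) (𝓝[>] t) (𝓝 (ν (⋂ s > t, Iic s))) :=
    tendsto_measure_biInter_gt (fun _ _ => measurableSet_Iic.nullMeasurableSet)
      (fun _ _ _ hij => Iic_subset_Iic.2 hij) ⟨t + 1, lt_add_one t, measure_ne_top _ _⟩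
  rw [hinter] at h
  exact (ENNReal.tendsto_toReal (measure_ne_top ν _)).comp h

variable {ν}

lemma quantile_le_iff {x t : ℝ} (hx : x ∈ Ioo 0 (ν.real univ)) :
    quantile ν x ≤ t ↔ x ≤ ν.real (Iic t) := by
  have hnonempty : {s | x ≤ ν.real (Iic s)}.Nonempty :=
    ((tendsto_measureReal_Iic_atTop ν).eventually_const_lt hx.2).exists.imp fun _ => le_of_lt
  have hbdd : BddBelow {s | x ≤ ν.real (Iic s)} := by
    obtain ⟨b, hb⟩ := ((tendsto_measureReal_Iic_atBot ν).eventually_lt_const hx.1).exists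
    exact ⟨b, fun s hs => ((monotone_measureReal_Iic ν).reflect_lt (hb.trans_le hs)).le⟩
  rw [quantile, indicator_of_mem hx]
  refine ⟨fun h => ?_, fun h => csInf_le hbdd h⟩
  refine ge_of_tendsto (tendsto_measureReal_Iic_nhdsGT ν t) ?_
  filter_upwards [self_mem_nhdsWithin] with s hs
  obtain ⟨r, hr, hrs⟩ := exists_lt_of_csInf_lt hnonempty (h.trans_lt hs)
  exact hr.trans (monotone_measureReal_Iic ν hrs.le)

lemma le_measureReal_Iic_quantile {x : ℝ} (hx : x ∈ Ioo 0 (ν.real univ)) :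
    x ≤ ν.real (Iic (quantile ν x)) :=
  (quantile_le_iff hx).1 le_rfl

variable (ν)

lemma monotoneOn_quantile : MonotoneOn (quantile ν) (Ioo 0 (ν.real univ)) := fun _ hx _ hy hxy =>
  (quantile_le_iff hx).2 (hxy.trans (le_measureReal_Iic_quantile hy))

lemma measurable_quantile : Measurable (quantile ν) := by
  have hzero {x : ℝ} (hx : x ∉ Ioo 0 (ν.real univ)) : quantile ν x = 0 := indicator_of_notMem hx _
  have hcompl : (Ioo 0 (ν.real univ))ᶜ.domRestrict (quantile ν) = fun _ => 0 :=
    funext fun x => hzero x.2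
  refine measurable_of_restrict_of_restrict_compl
    (measurableSet_Ioo (a := 0) (b := ν.real univ)) ?_ (hcompl ▸ measurable_const)
  exact Monotone.measurable fun x y hxy => monotoneOn_quantile ν x.2 y.2 hxy

lemma map_quantile : (volume.restrict (Ioo 0 (ν.real univ))).map (quantile ν) = ν := by
  refine Measure.ext_of_Iic _ _ fun t => ?_
  rw [Measure.map_apply (measurable_quantile ν) measurableSet_Iic,
    Measure.restrict_apply (measurable_quantile ν measurableSet_Iic)]
  have hpreimage : quantile ν ⁻¹' Iic t ∩ Ioo 0 (ν.real univ) =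
      Ioo 0 (ν.real univ) ∩ Iic (ν.real (Iic t)) := by
    ext x
    rw [inter_comm]
    exact and_congr_right fun hx => quantile_le_iff hx
  have hae : (Ioo 0 (ν.real univ) ∩ Iic (ν.real (Iic t)) : Set ℝ) =ᵐ[volume]
      (Ioc 0 (ν.real univ) ∩ Iic (ν.real (Iic t)) : Set ℝ) :=
    Ioo_ae_eq_Ioc.inter (ae_eq_refl _)
  rw [hpreimage, measure_congr hae, Ioc_inter_Iic,
    min_eq_right (measureReal_mono (subset_univ _)), Real.volume_Ioc, sub_zero, ofReal_measureReal]

end Quantile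

lemma exists_monotone_coupling {σ τ : Measure ℝ} [IsFiniteMeasure σ] [IsFiniteMeasure τ]
    (h : ∀ t, τ (Iic t) ≤ σ (Iic t)) :
    ∃ γ : Measure (ℝ × ℝ), γ.fst ≤ σ ∧ γ.snd = τ ∧ ∀ᵐ p ∂γ, p.1 ≤ p.2 := by
  have hIic (t : ℝ) : τ.real (Iic t) ≤ σ.real (Iic t) := ENNReal.toReal_mono (by finiteness) (h t)
  have huniv : τ.real univ ≤ σ.real univ :=
    le_of_tendsto_of_tendsto' (tendsto_measureReal_Iic_atTop τ) (tendsto_measureReal_Iic_atTop σ)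
      hIic
  have hσ := measurable_quantile σ
  have hτ := measurable_quantile τ
  refine ⟨(volume.restrict (Ioo 0 (τ.real univ))).map fun x => (quantile σ x, quantile τ x),
    ?_, ?_, ?_⟩
  · rw [Measure.fst_map_prodMk hτ]
    refine (Measure.map_mono ?_ hσ).trans_eq (map_quantile σ)
    exact Measure.restrict_mono_set _ (Ioo_subset_Ioo_right huniv)
  · rw [Measure.snd_map_prodMk hσ, map_quantile]
  · rw [ae_map_iff (hσ.prodMk hτ).aemeasurable (measurableSet_le measurable_fst measurable_snd)]
    filter_upwards [ae_restrict_mem measurableSet_Ioo] with x hx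
    rw [quantile_le_iff ⟨hx.1, hx.2.trans_le huniv⟩]
    exact (le_measureReal_Iic_quantile hx).trans (hIic _)

section WithDensity

variable {α β : Type*} [MeasurableSpace α] [MeasurableSpace β]

lemma withDensity_inv_le_restrict {m ρ : Measure α} {f : α → ℝ≥0∞} (hf : Measurable f)
    (h : ρ ≤ m.withDensity f) : ρ.withDensity f⁻¹ ≤ m.restrict (Function.support f) := by
  calc ρ.withDensity f⁻¹ ≤ (m.withDensity f).withDensity f⁻¹ := by
        refine Measure.le_iff.2 fun B hB => ?_
        rw [withDensity_apply _ hB, withDensity_apply _ hB]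
        exact lintegral_mono' (Measure.restrict_mono_measure h B) le_rfl
    _ = m.withDensity (f * f⁻¹) := (withDensity_mul m hf hf.inv).symm
    _ ≤ m.withDensity ((Function.support f).indicator 1) := by
        refine withDensity_mono (Eventually.of_forall fun x => ?_)
        by_cases hx : f x = 0
        · simp [hx]
        · simp [hx, ENNReal.mul_inv_le_one]
    _ = m.restrict (Function.support f) := withDensity_indicator_one (measurableSet_support hf)

lemma map_withDensity_comp {γ : Measure α} {φ : α → β} (hφ : Measurable φ) {f : β → ℝ≥0∞}
    (hf : Measurable f) : (γ.withDensity (f ∘ φ)).map φ = (γ.map φ).withDensity f := by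
  ext B hB
  rw [Measure.map_apply hφ hB, withDensity_apply _ (hφ hB), withDensity_apply _ hB,
    setLIntegral_map hB hf hφ]
  rfl

lemma map_withDensity_le_restrict {γ : Measure α} {m : Measure β} {φ : α → β} {f : β → ℝ≥0∞}
    {w : α → ℝ≥0∞} (hφ : Measurable φ) (hf : Measurable f) (h : γ.map φ ≤ m.withDensity f)
    (hw : w ≤ᵐ[γ] (f ∘ φ)⁻¹) : (γ.withDensity w).map φ ≤ m.restrict (Function.support f) :=
  calc (γ.withDensity w).map φ ≤ (γ.withDensity (f⁻¹ ∘ φ)).map φ :=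
        Measure.map_mono (withDensity_mono hw) hφ
    _ = (γ.map φ).withDensity f⁻¹ := map_withDensity_comp hφ hf.inv
    _ ≤ m.restrict (Function.support f) := withDensity_inv_le_restrict hf h

lemma setIntegral_withDensity_inv_ofReal {γ : Measure α} {h : α → ℝ} (hm : Measurable h)
    (hpos : ∀ᵐ x ∂γ, 0 < h x) {S : Set α} (hS : MeasurableSet S) :
    ∫ x in S, h x ∂γ.withDensity (fun x => (ENNReal.ofReal (h x))⁻¹) = γ.real S := by
  have hfinite : ∀ᵐ x ∂γ.restrict S, (ENNReal.ofReal (h x))⁻¹ < ∞ :=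
    ae_restrict_of_ae (hpos.mono fun x hx => by simpa using hx)
  calc ∫ x in S, h x ∂γ.withDensity (fun x => (ENNReal.ofReal (h x))⁻¹)
      = ∫ x in S, ((ENNReal.ofReal (h x))⁻¹).toReal • h x ∂γ :=
        setIntegral_withDensity_eq_setIntegral_toReal_smul hm.ennreal_ofReal.inv hfinite h hS
    _ = ∫ _ in S, (1 : ℝ) ∂γ := by
        refine integral_congr_ae (ae_restrict_of_ae (hpos.mono fun x hx => ?_))
        simp [hx.le, hx.ne']
    _ = γ.real S := by simp

lemma measureReal_withDensity_ofReal_sub {m : Measure α} {h : α → ℝ} (hm : Integrable h m)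
    {B : Set α} (hB : MeasurableSet B) :
    (m.withDensity fun x => ENNReal.ofReal (h x)).real B -
      (m.withDensity fun x => ENNReal.ofReal (-h x)).real B = ∫ x in B, h x ∂m := by
  rw [integral_eq_lintegral_pos_part_sub_lintegral_neg_part hm.integrableOn, measureReal_def,
    measureReal_def, withDensity_apply _ hB, withDensity_apply _ hB]

end WithDensity

/-- The self-coupling of `m` that exchanges the two coordinates of the pairs charged by `η` and
leaves the remaining mass `m - (η.fst + η.snd)` on the diagonal. It is meant for
`η.fst + η.snd ≤ m`, as subtraction of measures is truncated. -/
noncomputable def swapCoupling {α : Type*} [MeasurableSpace α] (m : Measure α)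
    (η : Measure (α × α)) : Measure (α × α) :=
  η + η.map Prod.swap + (m - (η.fst + η.snd)).map fun x => (x, x)

section SwapCoupling

variable {α : Type*} [MeasurableSpace α] {m : Measure α} [IsFiniteMeasure m]
  {η : Measure (α × α)}

lemma sub_fst_add_snd_add_cancel (h : η.fst + η.snd ≤ m) :
    m - (η.fst + η.snd) + (η.fst + η.snd) = m :=
  have := isFiniteMeasure_of_le m h
  Measure.sub_add_cancel_of_le h

lemma fst_swapCoupling (h : η.fst + η.snd ≤ m) : (swapCoupling m η).fst = m := by
  rw [swapCoupling, Measure.fst_add, Measure.fst_add, Measure.fst_map_swap,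
    Measure.fst_map_prodMk measurable_id', add_comm]
  exact (congrArg₂ _ Measure.map_id rfl).trans (sub_fst_add_snd_add_cancel h)

lemma snd_swapCoupling (h : η.fst + η.snd ≤ m) : (swapCoupling m η).snd = m := by
  rw [swapCoupling, Measure.snd_add, Measure.snd_add, Measure.snd_map_swap,
    Measure.snd_map_prodMk measurable_id', add_comm, add_comm η.snd]
  exact (congrArg₂ _ Measure.map_id rfl).trans (sub_fst_add_snd_add_cancel h)

lemma setIntegral_swapCoupling (h : η.fst + η.snd ≤ m) {φ : α → ℝ} (hφ : Integrable φ m)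
    {B : Set α} (hB : MeasurableSet B) :
    ∫ p in Prod.fst ⁻¹' B, φ p.2 ∂swapCoupling m η = ∫ x in B, φ x ∂m +
      ∫ p in Prod.fst ⁻¹' B, (φ p.2 - φ p.1) ∂η - ∫ p in Prod.snd ⁻¹' B, (φ p.2 - φ p.1) ∂η := by
  set ρ := m - (η.fst + η.snd)
  have hρm : ρ + (η.fst + η.snd) = m := sub_fst_add_snd_add_cancel h
  have hfst : Integrable φ η.fst := hφ.mono_measure ((Measure.le_add_right le_rfl).trans h)
  have hsnd : Integrable φ η.snd := hφ.mono_measure ((Measure.le_add_left le_rfl).trans h)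
  have hφρ : Integrable φ ρ := hφ.mono_measure Measure.sub_le
  have hη₁ : Integrable (fun p => φ p.1) η := hfst.comp_measurable measurable_fst
  have hη₂ : Integrable (fun p => φ p.2) η := hsnd.comp_measurable measurable_snd
  have hπ : Integrable (fun p => φ p.2) (swapCoupling m η) :=
    ((snd_swapCoupling h).symm ▸ hφ : Integrable φ (swapCoupling m η).snd).comp_measurable
      measurable_snd
  have hdiag : Measurable fun x : α => (x, x) := by fun_prop
  have hmarginal : ∫ x in B, φ x ∂m = ∫ x in B, φ x ∂ρ +
      (∫ p in Prod.fst ⁻¹' B, φ p.1 ∂η + ∫ p in Prod.snd ⁻¹' B, φ p.2 ∂η) := by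
    conv_lhs => rw [← hρm]
    rw [Measure.restrict_add,
      integral_add_measure hφρ.integrableOn (hfst.add_measure hsnd).integrableOn,
      Measure.restrict_add, integral_add_measure hfst.integrableOn hsnd.integrableOn,
      Measure.fst, setIntegral_map hB hfst.aestronglyMeasurable measurable_fst.aemeasurable,
      Measure.snd, setIntegral_map hB hsnd.aestronglyMeasurable measurable_snd.aemeasurable]
  have hcoupling : ∫ p in Prod.fst ⁻¹' B, φ p.2 ∂swapCoupling m η =
      ∫ p in Prod.fst ⁻¹' B, φ p.2 ∂η + ∫ p in Prod.snd ⁻¹' B, φ p.1 ∂η + ∫ x in B, φ x ∂ρ := by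
    have hswapρ := integrable_add_measure.1 hπ
    have hswap := integrable_add_measure.1 hswapρ.1
    rw [swapCoupling, Measure.restrict_add,
      integral_add_measure hswapρ.1.integrableOn hswapρ.2.integrableOn, Measure.restrict_add,
      integral_add_measure hswap.1.integrableOn hswap.2.integrableOn,
      setIntegral_map (measurable_fst hB) hswap.2.aestronglyMeasurable measurable_swap.aemeasurable,
      setIntegral_map (measurable_fst hB) hswapρ.2.aestronglyMeasurable hdiag.aemeasurable]
    rfl
  rw [hcoupling, hmarginal, integral_sub hη₂.integrableOn hη₁.integrableOn,
    integral_sub hη₂.integrableOn hη₁.integrableOn]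
  ring

end SwapCoupling

lemma fst_add_snd_withDensity_inv_le {α : Type*} [MeasurableSpace α] {m : Measure α}
    {γ : Measure (α × α)} {f g : α → ℝ≥0∞} {w : α × α → ℝ≥0∞} (hf : Measurable f)
    (hg : Measurable g) (hfg : Disjoint (Function.support f) (Function.support g))
    (hfst : γ.fst ≤ m.withDensity f) (hsnd : γ.snd ≤ m.withDensity g)
    (hfw : ∀ᵐ p ∂γ, f p.1 ≤ w p) (hgw : ∀ᵐ p ∂γ, g p.2 ≤ w p) :
    (γ.withDensity w⁻¹).fst + (γ.withDensity w⁻¹).snd ≤ m :=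
  calc (γ.withDensity w⁻¹).fst + (γ.withDensity w⁻¹).snd
      ≤ m.restrict (Function.support f) + m.restrict (Function.support g) := by
        refine add_le_add (map_withDensity_le_restrict measurable_fst hf hfst ?_)
          (map_withDensity_le_restrict measurable_snd hg hsnd ?_)
        · exact hfw.mono fun _ hp => ENNReal.inv_le_inv.2 hp
        · exact hgw.mono fun _ hp => ENNReal.inv_le_inv.2 hp
    _ = m.restrict (Function.support f ∪ Function.support g) :=
        (Measure.restrict_union hfg (measurableSet_support hg)).symm
    _ ≤ m := Measure.restrict_le_self

section SelfCoupling

variable {m : Measure ℝ} {a b : ℝ → ℝ} {s : Set ℝ}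

lemma exists_coupling_ofReal_sub (ha : Measurable a) (hb : Measurable b)
    (hint : Integrable (fun x => b x - a x) m) (hmono : MonotoneOn b s) (hs : ∀ᵐ x ∂m, x ∈ s)
    (h : ∀ t, 0 ≤ ∫ x in Iic t, (b x - a x) ∂m) :
    ∃ γ : Measure (ℝ × ℝ), γ.fst ≤ m.withDensity (fun x => ENNReal.ofReal (b x - a x)) ∧
      γ.snd = m.withDensity (fun x => ENNReal.ofReal (a x - b x)) ∧
      ∀ᵐ p ∂γ, a p.1 < b p.1 ∧ b p.1 ≤ b p.2 ∧ b p.2 < a p.2 := by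
  set f : ℝ → ℝ≥0∞ := fun x => ENNReal.ofReal (b x - a x)
  set g : ℝ → ℝ≥0∞ := fun x => ENNReal.ofReal (a x - b x)
  have hneg : (fun x => -(b x - a x)) = fun x => a x - b x := funext fun x => neg_sub _ _
  have : IsFiniteMeasure (m.withDensity f) := isFiniteMeasure_withDensity_ofReal hint.2
  have : IsFiniteMeasure (m.withDensity g) :=
    isFiniteMeasure_withDensity_ofReal (hneg ▸ hint.neg : Integrable (fun x => a x - b x) m).2
  have hIic (t : ℝ) : m.withDensity g (Iic t) ≤ m.withDensity f (Iic t) := by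
    have hreal : (m.withDensity g).real (Iic t) ≤ (m.withDensity f).real (Iic t) := by
      simpa only [← measureReal_withDensity_ofReal_sub hint measurableSet_Iic, neg_sub,
        sub_nonneg] using h t
    exact (ENNReal.toReal_le_toReal (by finiteness) (by finiteness)).1 hreal
  obtain ⟨γ, hfst, hsnd, hle⟩ := exists_monotone_coupling hIic
  have hpos {k : ℝ → ℝ} (hk : Measurable k) :
      ∀ᵐ x ∂m.withDensity (fun x => ENNReal.ofReal (k x)), x ∈ s ∧ 0 < k x := by
    rw [ae_withDensity_iff hk.ennreal_ofReal]
    exact hs.mono fun x hx hkx => ⟨hx, by simpa using hkx⟩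
  have hf : ∀ᵐ p ∂γ, p.1 ∈ s ∧ 0 < b p.1 - a p.1 :=
    ae_of_ae_map measurable_fst.aemeasurable (ae_mono hfst (hpos (hb.sub ha)))
  have hg : ∀ᵐ p ∂γ, p.2 ∈ s ∧ 0 < a p.2 - b p.2 :=
    ae_of_ae_map measurable_snd.aemeasurable (hsnd ▸ hpos (ha.sub hb))
  refine ⟨γ, hfst, hsnd, ?_⟩
  filter_upwards [hf, hg, hle] with p hp₁ hp₂ hp
  exact ⟨sub_pos.1 hp₁.2, hmono hp₁.1 hp₂.1 hp, sub_pos.1 hp₂.2⟩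

lemma exists_selfCoupling_setIntegral_snd_le [IsFiniteMeasure m] (ha : Measurable a)
    (hb : Measurable b) (ham : Integrable a m) (hbm : Integrable b m) (hmono : MonotoneOn b s)
    (hs : ∀ᵐ x ∂m, x ∈ s) (h : ∀ t, 0 ≤ ∫ x in Iic t, (b x - a x) ∂m) :
    ∃ π : Measure (ℝ × ℝ), π.fst = m ∧ π.snd = m ∧
      ∀ B, MeasurableSet B → ∫ p in Prod.fst ⁻¹' B, a p.2 ∂π ≤ ∫ x in B, b x ∂m := by
  have hint : Integrable (fun x => b x - a x) m := hbm.sub ham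
  obtain ⟨γ, hfst, hsnd, hγ⟩ := exists_coupling_ofReal_sub ha hb hint hmono hs h
  let w : ℝ × ℝ → ℝ≥0∞ := fun p => ENNReal.ofReal (a p.2 - a p.1)
  have hdisj : Disjoint (Function.support fun x => ENNReal.ofReal (b x - a x))
      (Function.support fun x => ENNReal.ofReal (a x - b x)) :=
    disjoint_left.2 fun x hx hx' => by
      simp only [Function.mem_support, ne_eq, ENNReal.ofReal_eq_zero, not_le, sub_pos] at hx hx'
      exact lt_asymm hx hx'
  set η := γ.withDensity w⁻¹
  have hηm : η.fst + η.snd ≤ m :=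
    fst_add_snd_withDensity_inv_le (by fun_prop) (by fun_prop) hdisj hfst hsnd.le
      (hγ.mono fun p hp => ENNReal.ofReal_le_ofReal (by linarith))
      (hγ.mono fun p hp => ENNReal.ofReal_le_ofReal (by linarith))
  refine ⟨swapCoupling m η, fst_swapCoupling hηm, snd_swapCoupling hηm, fun B hB => ?_⟩
  have hexchange {S : Set (ℝ × ℝ)} (hS : MeasurableSet S) :
      ∫ p in S, (a p.2 - a p.1) ∂η = γ.real S :=
    setIntegral_withDensity_inv_ofReal (by fun_prop) (hγ.mono fun p hp => by linarith) hS
  calc ∫ p in Prod.fst ⁻¹' B, a p.2 ∂swapCoupling m η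
      = ∫ x in B, a x ∂m + γ.fst.real B - γ.snd.real B := by
        rw [setIntegral_swapCoupling hηm ham hB, hexchange (measurable_fst hB),
          hexchange (measurable_snd hB), Measure.fst, Measure.snd,
          map_measureReal_apply measurable_fst hB, map_measureReal_apply measurable_snd hB]
    _ ≤ ∫ x in B, a x ∂m + (m.withDensity fun x => ENNReal.ofReal (b x - a x)).real B -
          (m.withDensity fun x => ENNReal.ofReal (a x - b x)).real B := by
        have := isFiniteMeasure_withDensity_ofReal hint.2
        rw [hsnd]
        gcongr
        exact ENNReal.toReal_mono (measure_ne_top _ _) (hfst B)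
    _ = ∫ x in B, a x ∂m + ∫ x in B, (b x - a x) ∂m := by
        rw [← measureReal_withDensity_ofReal_sub hint hB, add_sub_assoc]
        simp only [neg_sub]
    _ = ∫ x in B, b x ∂m := by
        rw [integral_sub hbm.integrableOn ham.integrableOn, add_sub_cancel]

end SelfCoupling

/-- The increasing concave order on laws on `ℝ`, also known as second-order stochastic dominance:
`μ` lies below `ν` if no increasing concave utility prefers `μ` to `ν`. As for `IsPStarVar`, only
utilities that are integrable for both laws are tested. -/
def SecondOrderLE (μ ν : Measure ℝ) : Prop :=
  ∀ f : ℝ → ℝ, Monotone f → ConcaveOn ℝ univ f → Integrable f μ → Integrable f ν →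
    ∫ x, f x ∂μ ≤ ∫ x, f x ∂ν

/-- The uniform law on the unit interval, carried by the open interval so that it is the natural
domain of the quantile functions of probability measures. -/
noncomputable abbrev unitUniform : Measure ℝ := volume.restrict (Ioo 0 1)

instance : IsProbabilityMeasure unitUniform := ⟨by simp⟩

lemma ae_unitUniform_mem_Ioo : ∀ᵐ x ∂unitUniform, x ∈ Ioo (0 : ℝ) 1 :=
  ae_restrict_mem measurableSet_Ioo

section UnitUniform

variable {ν : Measure ℝ} [IsProbabilityMeasure ν]

lemma map_quantile_unitUniform : unitUniform.map (quantile ν) = ν := by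
  simpa only [probReal_univ] using map_quantile ν

lemma monotoneOn_quantile_Ioo_zero_one : MonotoneOn (quantile ν) (Ioo 0 1) := by
  simpa only [probReal_univ] using monotoneOn_quantile ν

lemma integrable_comp_quantile {f : ℝ → ℝ} (hf : Integrable f ν) :
    Integrable (fun x => f (quantile ν x)) unitUniform :=
  ((map_quantile_unitUniform (ν := ν)).symm ▸ hf :
    Integrable f (unitUniform.map (quantile ν))).comp_measurable (measurable_quantile ν)

lemma integral_comp_quantile {f : ℝ → ℝ} (hf : AEStronglyMeasurable f ν) :
    ∫ x, f (quantile ν x) ∂unitUniform = ∫ x, f x ∂ν := by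
  conv_rhs => rw [← map_quantile_unitUniform (ν := ν)]
  refine (integral_map (measurable_quantile ν).aemeasurable ?_).symm
  rwa [map_quantile_unitUniform]

end UnitUniform

section SecondOrderLE

variable {μ ν : Measure ℝ} [IsProbabilityMeasure μ] [IsProbabilityMeasure ν]

lemma SecondOrderLE.integral_comp_quantile_sub_nonneg (h : SecondOrderLE μ ν) {f : ℝ → ℝ}
    (hmono : Monotone f) (hconc : ConcaveOn ℝ univ f) (hμ : Integrable f μ)
    (hν : Integrable f ν) :
    0 ≤ ∫ x, (f (quantile ν x) - f (quantile μ x)) ∂unitUniform := by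
  rw [integral_sub (integrable_comp_quantile hν) (integrable_comp_quantile hμ),
    integral_comp_quantile hν.1, integral_comp_quantile hμ.1]
  exact sub_nonneg.2 (h f hmono hconc hμ hν)

lemma SecondOrderLE.setIntegral_Iic_quantile_sub_nonneg (h : SecondOrderLE μ ν)
    (hμ : Integrable id μ) (hν : Integrable id ν) (t : ℝ) :
    0 ≤ ∫ x in Iic t, (quantile ν x - quantile μ x) ∂unitUniform := by
  rcases le_or_gt t 0 with ht₀ | ht₀
  · have hnull : unitUniform (Iic t) = 0 :=
      measure_eq_zero_iff_ae_notMem.2 <| ae_unitUniform_mem_Ioo.mono fun x hx hxt =>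
        (hx.1.trans_le hxt).not_ge ht₀
    rw [setIntegral_measure_zero _ hnull]
  rcases le_or_gt 1 t with ht₁ | ht₁
  · have hfull : ∀ᵐ x ∂unitUniform, x ∈ Iic t :=
      ae_unitUniform_mem_Ioo.mono fun x hx => hx.2.le.trans ht₁
    rw [Measure.restrict_eq_self_of_ae_mem hfull]
    exact h.integral_comp_quantile_sub_nonneg monotone_id (concaveOn_id convex_univ) hμ hν
  -- Capping at the `t`-quantile of `μ` leaves `quantile μ` unchanged on `(0, t]` and makes it
  -- constant beyond, so the test function `min · c` isolates the integral up to `t`.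
  set c := quantile μ t
  have hint : Integrable (fun x => quantile ν x - quantile μ x) unitUniform :=
    (integrable_comp_quantile hν).sub (integrable_comp_quantile hμ)
  have hμc : Integrable (fun y => min y c) μ := hμ.inf (integrable_const c)
  have hνc : Integrable (fun y => min y c) ν := hν.inf (integrable_const c)
  calc 0 ≤ ∫ x, (min (quantile ν x) c - min (quantile μ x) c) ∂unitUniform :=
        h.integral_comp_quantile_sub_nonneg (fun _ _ hxy => min_le_min_right c hxy)
          ((concaveOn_id convex_univ).inf (concaveOn_const c convex_univ)) hμc hνc
    _ ≤ ∫ x, (Iic t).indicator (fun x => quantile ν x - quantile μ x) x ∂unitUniform := by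
        refine integral_mono_ae ((integrable_comp_quantile hνc).sub (integrable_comp_quantile hμc))
          (hint.indicator measurableSet_Iic) ?_
        filter_upwards [ae_unitUniform_mem_Ioo] with x hx
        rcases le_or_gt x t with hxt | hxt
        · have hxc : quantile μ x ≤ c := monotoneOn_quantile_Ioo_zero_one hx ⟨ht₀, ht₁⟩ hxt
          simp [hxt, hxc]
        · have hcx : c ≤ quantile μ x := monotoneOn_quantile_Ioo_zero_one ⟨ht₀, ht₁⟩ hx hxt.le
          simp [hxt, hcx]
    _ = ∫ x in Iic t, (quantile ν x - quantile μ x) ∂unitUniform :=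
        integral_indicator measurableSet_Iic

lemma SecondOrderLE.exists_coupling_setIntegral_snd_le (h : SecondOrderLE μ ν)
    (hμ : Integrable id μ) (hν : Integrable id ν) :
    ∃ ρ : Measure (ℝ × ℝ), ρ.fst = ν ∧ ρ.snd = μ ∧
      ∀ B, MeasurableSet B → ∫ p in Prod.fst ⁻¹' B, p.2 ∂ρ ≤ ∫ x in B, x ∂ν := by
  have hQμ := measurable_quantile μ
  have hQν := measurable_quantile ν
  obtain ⟨π, hfst, hsnd, hmean⟩ := exists_selfCoupling_setIntegral_snd_le hQμ hQν
    (integrable_comp_quantile hμ) (integrable_comp_quantile hν) monotoneOn_quantile_Ioo_zero_one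
    ae_unitUniform_mem_Ioo (h.setIntegral_Iic_quantile_sub_nonneg hμ hν)
  have hQ : Measurable (Prod.map (quantile ν) (quantile μ)) := hQν.prodMap hQμ
  refine ⟨π.map (Prod.map (quantile ν) (quantile μ)), ?_, ?_, fun B hB => ?_⟩
  · rw [Measure.fst, Measure.map_map measurable_fst hQ, Prod.map_fst',
      ← Measure.map_map hQν measurable_fst, ← Measure.fst, hfst, map_quantile_unitUniform]
  · rw [Measure.snd, Measure.map_map measurable_snd hQ, Prod.map_snd',
      ← Measure.map_map hQμ measurable_snd, ← Measure.snd, hsnd, map_quantile_unitUniform]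
  calc ∫ p in Prod.fst ⁻¹' B, p.2 ∂π.map (Prod.map (quantile ν) (quantile μ))
      = ∫ p in Prod.fst ⁻¹' (quantile ν ⁻¹' B), quantile μ p.2 ∂π :=
        setIntegral_map (measurable_fst hB) measurable_snd.aestronglyMeasurable hQ.aemeasurable
    _ ≤ ∫ x in quantile ν ⁻¹' B, quantile ν x ∂unitUniform := hmean _ (hQν hB)
    _ = ∫ x in B, x ∂unitUniform.map (quantile ν) :=
        (setIntegral_map hB measurable_id.aestronglyMeasurable hQν.aemeasurable).symm
    _ = ∫ x in B, x ∂ν := by rw [map_quantile_unitUniform]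

lemma SecondOrderLE.exists_isMarkovKernel (h : SecondOrderLE μ ν) (hμ : Integrable id μ)
    (hν : Integrable id ν) :
    ∃ κ : Kernel ℝ ℝ, IsMarkovKernel κ ∧ κ ∘ₘ ν = μ ∧ ∀ᵐ x ∂ν, ∫ y, y ∂κ x ≤ x := by
  obtain ⟨ρ, rfl, rfl, hmean⟩ := h.exists_coupling_setIntegral_snd_le hμ hν
  have : IsFiniteMeasure ρ := ⟨by rw [← Measure.fst_univ]; finiteness⟩
  have hint : Integrable Prod.snd ρ := hμ.comp_measurable measurable_snd
  refine ⟨ρ.condKernel, inferInstance, ?_, ?_⟩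
  · rw [← Measure.snd_compProd, ρ.disintegrate]
  refine ae_le_of_forall_setIntegral_le hint.integral_condKernel hν fun B hB _ => ?_
  rw [Measure.setIntegral_condKernel_univ_right hB hint.integrableOn, prod_univ]
  exact hmean B hB

end SecondOrderLE

section CondDistrib

variable {Ω E S : Type*} [MeasurableSpace Ω] [MeasurableSpace E] [MeasurableSpace S]
  [StandardBorelSpace S] [Nonempty S] {μ : Measure Ω} [IsFiniteMeasure μ] {X : Ω → E}

lemma exists_map_prodMk_eq_compProd (κ : Kernel E S) [IsMarkovKernel κ] (hX : Measurable X)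
    {W : Ω → unitInterval} (hW : Measurable W) (hWlaw : μ.map W = volume)
    (hind : IndepFun X W μ) :
    ∃ T : Ω → S, Measurable T ∧ μ.map (fun ω => (X ω, T ω)) = μ.map X ⊗ₘ κ := by
  obtain ⟨f, hf, hfκ⟩ := κ.exists_measurable_map_eq_unitInterval
  have hg : Measurable fun z : E × unitInterval => (z.1, f z.1 z.2) := measurable_fst.prodMk hf
  refine ⟨fun ω => f (X ω) (W ω), hf.comp (hX.prodMk hW), ?_⟩
  have hmap : μ.map (fun ω => (X ω, f (X ω) (W ω))) =
      ((μ.map X).prod volume).map fun z => (z.1, f z.1 z.2) := by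
    rw [← hWlaw, ← hind.map_prod_eq_prod_map_map hX.aemeasurable hW.aemeasurable,
      Measure.map_map hg (hX.prodMk hW)]
    rfl
  ext s hs
  rw [hmap, Measure.map_apply hg hs, Measure.prod_apply (hg hs), Measure.compProd_apply hs]
  refine lintegral_congr fun x => ?_
  rw [← hfκ, Measure.map_apply hf.of_uncurry_left (measurable_prodMk_left hs)]
  rfl

lemma condExp_ae_eq_integral_of_map_prodMk_eq_compProd {κ : Kernel E S} [IsFiniteKernel κ]
    {Y : Ω → S} (hX : Measurable X) (hY : Measurable Y)
    (hκ : μ.map (fun ω => (X ω, Y ω)) = μ.map X ⊗ₘ κ) {f : E × S → ℝ} (hf : StronglyMeasurable f)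
    (hint : Integrable (fun ω => f (X ω, Y ω)) μ) :
    μ[fun ω => f (X ω, Y ω) | MeasurableSpace.comap X inferInstance] =ᵐ[μ]
      fun ω => ∫ y, f (X ω, y) ∂κ (X ω) := by
  have hae := ae_of_ae_map hX.aemeasurable
    (condDistrib_ae_eq_of_measure_eq_compProd X hY.aemeasurable hκ)
  filter_upwards [condExp_prod_ae_eq_integral_condDistrib hX hY.aemeasurable hf hint, hae]
    with ω hcond hω
  rw [hcond, hω]

end CondDistrib

section CondProb

variable {Ω E : Type*} [MeasurableSpace Ω] [MeasurableSpace E] {μ : Measure Ω}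
  [IsProbabilityMeasure μ] {X : Ω → E} {T T' : Ω → ℝ}

lemma condExp_indicator_le_ae_eq_condExp_cdf (hX : Measurable X) (hT : Measurable T)
    (hT' : Measurable T') (hind : IndepFun T' (fun ω => (T ω, X ω)) μ) :
    μ[indicator {ω | T' ω ≤ T ω} (fun _ => (1 : ℝ)) | MeasurableSpace.comap X inferInstance] =ᵐ[μ]
      μ[fun ω => cdf (μ.map T') (T ω) | MeasurableSpace.comap X inferInstance] := by
  have := Measure.isProbabilityMeasure_map (μ := μ) hT'.aemeasurable
  have hTX : Measurable fun ω => (T ω, X ω) := hT.prodMk hX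
  have hXle : MeasurableSpace.comap X inferInstance ≤
      MeasurableSpace.comap (fun ω => (T ω, X ω)) inferInstance :=
    (measurable_snd.comp (comap_measurable fun ω => (T ω, X ω))).comap_le
  have hS : MeasurableSet {p : (ℝ × E) × ℝ | p.2 ≤ p.1.1} :=
    measurableSet_le (by fun_prop) (by fun_prop)
  have hlaw : μ.map (fun ω => ((T ω, X ω), T' ω)) =
      μ.map (fun ω => (T ω, X ω)) ⊗ₘ Kernel.const (ℝ × E) (μ.map T') := by
    rw [Measure.compProd_const,
      ← hind.symm.map_prod_eq_prod_map_map hTX.aemeasurable hT'.aemeasurable]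
  have hcdf : μ[indicator {ω | T' ω ≤ T ω} (fun _ => (1 : ℝ)) |
      MeasurableSpace.comap (fun ω => (T ω, X ω)) inferInstance] =ᵐ[μ]
        fun ω => cdf (μ.map T') (T ω) := by
    refine (condExp_ae_eq_integral_of_map_prodMk_eq_compProd hTX hT' hlaw
      (stronglyMeasurable_const.indicator hS)
      ((integrable_const (1 : ℝ)).indicator (measurableSet_le hT' hT))).trans ?_
    refine Eventually.of_forall fun ω => ?_
    exact (integral_indicator_one (measurableSet_Iic (a := T ω))).trans (cdf_eq_real _ _).symm
  exact (condExp_condExp_of_le hXle hTX.comap_le).symm.trans (condExp_congr_ae hcdf)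

end CondProb

lemma integrable_comp_of_monotone_of_mem_Icc {α : Type*} [MeasurableSpace α] {μ : Measure α}
    [IsFiniteMeasure μ] {f : ℝ → ℝ} (hf : Monotone f) {Y : α → ℝ} (hY : AEMeasurable Y μ)
    {a b : ℝ} (hab : ∀ᵐ x ∂μ, Y x ∈ Icc a b) : Integrable (fun x => f (Y x)) μ :=
  Integrable.of_mem_Icc (f a) (f b) (hf.measurable.comp_aemeasurable hY)
    (hab.mono fun _ hx => ⟨hf hx.1, hf hx.2⟩)

lemma condExp_mem_Icc {α : Type*} {m mα : MeasurableSpace α} {μ : Measure α} [IsFiniteMeasure μ]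
    (hm : m ≤ mα) {Y : α → ℝ} (hY : AEMeasurable Y μ) {a b : ℝ} (hab : ∀ᵐ x ∂μ, Y x ∈ Icc a b) :
    ∀ᵐ x ∂μ, μ[Y | m] x ∈ Icc a b := by
  have hint : Integrable Y μ := .of_mem_Icc a b hY hab
  have ha := condExp_mono (m := m) (integrable_const a) hint (hab.mono fun _ hx => hx.1)
  have hb := condExp_mono (m := m) hint (integrable_const b) (hab.mono fun _ hx => hx.2)
  rw [condExp_const hm] at ha hb
  filter_upwards [ha, hb] with x hax hxb using ⟨hax, hxb⟩

lemma cdf_mem_Icc (ν : Measure ℝ) (t : ℝ) : cdf ν t ∈ Icc (0 : ℝ) 1 :=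
  ⟨cdf_nonneg ν t, cdf_le_one ν t⟩

lemma integral_unitUniform_le_integral_comp_cdf (ν : Measure ℝ) [IsProbabilityMeasure ν]
    {f : ℝ → ℝ} (hf : Monotone f) :
    ∫ u, f u ∂unitUniform ≤ ∫ t, f (cdf ν t) ∂ν := by
  have hG : Measurable (cdf ν) := (monotone_cdf ν).measurable
  calc ∫ u, f u ∂unitUniform ≤ ∫ u, f (cdf ν (quantile ν u)) ∂unitUniform := by
        refine integral_mono_ae
          (integrable_comp_of_monotone_of_mem_Icc hf aemeasurable_id
            (ae_unitUniform_mem_Ioo.mono fun _ hu => Ioo_subset_Icc_self hu))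
          (integrable_comp_of_monotone_of_mem_Icc hf
            (hG.comp (measurable_quantile ν)).aemeasurable
            (ae_of_all _ fun _ => cdf_mem_Icc ν _)) ?_
        filter_upwards [ae_unitUniform_mem_Ioo] with u hu
        rw [cdf_eq_real]
        exact hf (le_measureReal_Iic_quantile (by rwa [probReal_univ]))
    _ = ∫ t, f (cdf ν t) ∂ν :=
        integral_comp_quantile (f := fun t => f (cdf ν t))
          (hf.measurable.comp hG).aestronglyMeasurable

lemma cdf_unitUniform {t : ℝ} (ht : t ∈ Icc (0 : ℝ) 1) : cdf unitUniform t = t := by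
  rw [cdf_eq_real, unitUniform, Measure.restrict_congr_set Ioo_ae_eq_Ioc,
    measureReal_restrict_apply measurableSet_Iic, Iic_inter_Ioc_of_le ht.2,
    Real.volume_real_Ioc_of_le ht.1, sub_zero]

lemma cdf_comp_ae_eq_of_map_eq_unitUniform {α : Type*} [MeasurableSpace α] {μ : Measure α}
    {T : α → ℝ} (hT : AEMeasurable T μ) (hTlaw : μ.map T = unitUniform) :
    (fun x => cdf (μ.map T) (T x)) =ᵐ[μ] T := by
  have hT01 : ∀ᵐ x ∂μ, T x ∈ Ioo (0 : ℝ) 1 :=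
    ae_of_ae_map hT (hTlaw.symm ▸ ae_unitUniform_mem_Ioo)
  rw [hTlaw]
  exact hT01.mono fun _ hx => cdf_unitUniform (Ioo_subset_Icc_self hx)

lemma intervalIntegral_zero_one_eq_integral_unitUniform (f : ℝ → ℝ) :
    ∫ u in (0 : ℝ)..1, f u = ∫ u, f u ∂unitUniform := by
  rw [intervalIntegral.integral_of_le zero_le_one, integral_Ioc_eq_integral_Ioo]

section IsPStarVar

variable {Ω E : Type*} {m mΩ : MeasurableSpace Ω} [MeasurableSpace E] {μ : Measure Ω}
  {P : Ω → ℝ}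

lemma isPStarVar_of_condExp_cdf_le [IsProbabilityMeasure μ] (hm : m ≤ mΩ) {T : Ω → ℝ}
    (hT : Measurable T) (hle : μ[fun ω => cdf (μ.map T) (T ω) | m] ≤ᵐ[μ] P) :
    IsPStarVar μ P := by
  intro f hmono hconc _ hint
  have := Measure.isProbabilityMeasure_map (μ := μ) hT.aemeasurable
  set G : Ω → ℝ := fun ω => cdf (μ.map T) (T ω)
  have hG : Measurable G := (monotone_cdf _).measurable.comp hT
  have hG01 : ∀ᵐ ω ∂μ, G ω ∈ Icc (0 : ℝ) 1 := ae_of_all _ fun _ => cdf_mem_Icc _ _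
  have hGint : Integrable G μ := .of_mem_Icc 0 1 hG.aemeasurable hG01
  have hfG : Integrable (f ∘ G) μ :=
    integrable_comp_of_monotone_of_mem_Icc hmono hG.aemeasurable hG01
  have hfQ : Integrable (f ∘ μ[G | m]) μ :=
    integrable_comp_of_monotone_of_mem_Icc hmono integrable_condExp.aemeasurable
      (condExp_mem_Icc hm hG.aemeasurable hG01)
  have hcont : Continuous f := by
    simpa only [interior_univ, continuousOn_univ] using hconc.continuousOn_interior
  calc ∫ u in (0 : ℝ)..1, f u = ∫ u, f u ∂unitUniform :=
        intervalIntegral_zero_one_eq_integral_unitUniform f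
    _ ≤ ∫ t, f (cdf (μ.map T) t) ∂(μ.map T) := integral_unitUniform_le_integral_comp_cdf _ hmono
    _ = ∫ ω, (f ∘ G) ω ∂μ := integral_map hT.aemeasurable
        (hmono.measurable.comp (monotone_cdf _).measurable).aestronglyMeasurable
    _ = ∫ ω, μ[f ∘ G | m] ω ∂μ := (integral_condExp hm).symm
    _ ≤ ∫ ω, (f ∘ μ[G | m]) ω ∂μ := integral_mono_ae integrable_condExp hfQ
        (hconc.condExp_map_le_univ hm hcont.upperSemicontinuous hGint hfG)
    _ ≤ ∫ ω, f (P ω) ∂μ := integral_mono_ae hfQ hint (hle.mono fun ω hω => hmono hω)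

lemma IsPStarVar.secondOrderLE (h : IsPStarVar μ P) (hP : AEMeasurable P μ) :
    SecondOrderLE unitUniform (μ.map fun ω => min (P ω) 1) := by
  intro f hmono hconc _ hint
  have hminmono : Monotone fun x : ℝ => min x 1 := fun _ _ hxy => min_le_min_right 1 hxy
  have hminconc : ConcaveOn ℝ univ fun x : ℝ => min x 1 :=
    (concaveOn_id convex_univ).inf (concaveOn_const 1 convex_univ)
  have hcompconc : ConcaveOn ℝ univ fun x => f (min x 1) :=
    ⟨convex_univ, fun _ hx _ hy _ _ ha hb hab =>
      (hconc.2 trivial trivial ha hb hab).trans (hmono (hminconc.2 hx hy ha hb hab))⟩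
  have hP₁ : AEMeasurable (fun ω => min (P ω) 1) μ := hP.min aemeasurable_const
  calc ∫ u, f u ∂unitUniform = ∫ u, f (min u 1) ∂unitUniform :=
        integral_congr_ae <| ae_unitUniform_mem_Ioo.mono fun u hu => by
          simp only [min_eq_left hu.2.le]
    _ = ∫ u in (0 : ℝ)..1, f (min u 1) :=
        (intervalIntegral_zero_one_eq_integral_unitUniform _).symm
    _ ≤ ∫ ω, f (min (P ω) 1) ∂μ :=
        h (fun x => f (min x 1)) (hmono.comp hminmono)
          hcompconc
          (hmono.comp hminmono).intervalIntegrable (hint.comp_aemeasurable hP₁)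
    _ = ∫ x, f x ∂μ.map fun ω => min (P ω) 1 :=
        (integral_map hP₁ hmono.measurable.aestronglyMeasurable).symm

lemma map_projIcc_restrict_Icc :
    (volume.restrict (Icc (0 : ℝ) 1)).map (projIcc (0 : ℝ) 1 zero_le_one) = volume := by
  have h := unitInterval.measurePreserving_coe
  rw [← h.map_eq, Measure.map_map continuous_projIcc.measurable h.measurable,
    show projIcc (0 : ℝ) 1 zero_le_one ∘ Subtype.val = id from funext (projIcc_val _),
    Measure.map_id]

lemma IsPStarVar.exists_uniform_condExp_le [IsProbabilityMeasure μ] (h : IsPStarVar μ P)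
    {X : Ω → E} (hX : Measurable X) (hP : Measurable[MeasurableSpace.comap X inferInstance] P)
    (hPint : Integrable (fun ω => min (P ω) 1) μ) {V : Ω → ℝ} (hV : Measurable V)
    (hVlaw : μ.map V = volume.restrict (Icc 0 1)) (hVX : IndepFun V X μ) :
    ∃ T : Ω → ℝ, Measurable T ∧ μ.map T = unitUniform ∧
      μ[T | MeasurableSpace.comap X inferInstance] ≤ᵐ[μ] P := by
  obtain ⟨p, hp, rfl⟩ := hP.exists_eq_measurable_comp
  set p₁ : E → ℝ := fun x => min (p x) 1
  have hp₁ : Measurable p₁ := hp.min measurable_const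
  have : IsProbabilityMeasure (μ.map fun ω => min ((p ∘ X) ω) 1) :=
    Measure.isProbabilityMeasure_map (hp₁.comp hX).aemeasurable
  have hid : Integrable id unitUniform := .of_mem_Icc 0 1 aemeasurable_id
    (ae_unitUniform_mem_Ioo.mono fun _ hx => Ioo_subset_Icc_self hx)
  obtain ⟨κ, _, hκlaw, hκmean⟩ := (h.secondOrderLE (hp.comp hX).aemeasurable).exists_isMarkovKernel
    hid ((integrable_map_measure aestronglyMeasurable_id (hp₁.comp hX).aemeasurable).2 hPint)
  have hproj : Measurable (projIcc (0 : ℝ) 1 zero_le_one) := continuous_projIcc.measurable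
  obtain ⟨T, hT, hTlaw⟩ := exists_map_prodMk_eq_compProd (κ.comap p₁ hp₁) hX (hproj.comp hV)
    (by rw [← Measure.map_map hproj hV, hVlaw, map_projIcc_restrict_Icc])
    (hVX.symm.comp measurable_id hproj)
  have hTuniform : μ.map T = unitUniform := by
    rw [← Measure.snd_map_prodMk hX, hTlaw, Measure.snd_compProd,
      ← Kernel.comp_deterministic_eq_comap, ← Measure.comp_assoc,
      Measure.deterministic_comp_eq_map, Measure.map_map hp₁ hX]
    exact hκlaw
  have hTint : Integrable T μ := (hTuniform.symm ▸ hid : Integrable id (μ.map T)).comp_measurable hT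
  refine ⟨T, hT, hTuniform, ?_⟩
  have hcond := condExp_ae_eq_integral_of_map_prodMk_eq_compProd hX hT hTlaw
    measurable_snd.stronglyMeasurable hTint
  filter_upwards [hcond, ae_of_ae_map (hp₁.comp hX).aemeasurable hκmean] with ω hω hmean
  exact hω.trans_le (hmean.trans (min_le_left _ _))

end IsPStarVar

end

/-- **Theorem (probabilistic interpretation of p*-values).**
Let `X` be a random vector and `P` a nonnegative `σ(X)`-measurable random variable, on a
probability space rich enough to support a uniform random variable independent of any given
random vector.  Then `P` is a p*-variable if and only if there are random variables `T`, `T'`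
with `T'` identically distributed as `T` and independent of the pair `(T, X)`, such that
`P ≥ ℙ(T' ≤ T | X)` almost surely. -/
theorem pStarVar_iff_exists_condProb_le
    {Ω E : Type*} [MeasurableSpace Ω] [MeasurableSpace E]
    (μ : Measure Ω) [IsProbabilityMeasure μ]
    (X : Ω → E) (hX : Measurable X)
    (hrich : ∀ Y : Ω → ℝ × E, Measurable Y →
      ∃ V : Ω → ℝ, Measurable V ∧ μ.map V = volume.restrict (Set.Icc (0:ℝ) 1) ∧
        IndepFun V Y μ)
    (P : Ω → ℝ) (hP : Measurable[MeasurableSpace.comap X inferInstance] P)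
    (hP0 : ∀ ω, 0 ≤ P ω) :
    IsPStarVar μ P ↔
      ∃ T T' : Ω → ℝ,
        Measurable T ∧ Measurable T' ∧
        IdentDistrib T' T μ μ ∧ IndepFun T' (fun ω => (T ω, X ω)) μ ∧
        ∀ᵐ ω ∂μ,
          (μ[Set.indicator {ω' | T' ω' ≤ T ω'} (fun _ => (1:ℝ)) |
              MeasurableSpace.comap X inferInstance]) ω ≤ P ω := by
  constructor
  · intro h
    have hPm : Measurable P := hP.mono hX.comap_le le_rfl
    have hPint : Integrable (fun ω => min (P ω) 1) μ :=
      .of_mem_Icc 0 1 (hPm.min measurable_const).aemeasurable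
        (ae_of_all _ fun ω => ⟨le_min (hP0 ω) zero_le_one, min_le_right _ _⟩)
    obtain ⟨V, hV, hVlaw, hVind⟩ := hrich (fun ω => (0, X ω)) (measurable_const.prodMk hX)
    obtain ⟨T, hT, hTlaw, hTP⟩ := h.exists_uniform_condExp_le hX hP hPint hV hVlaw
      (hVind.comp measurable_id measurable_snd)
    obtain ⟨T', hT', hT'law, hT'ind⟩ := hrich (fun ω => (T ω, X ω)) (hT.prodMk hX)
    rw [← Measure.restrict_congr_set Ioo_ae_eq_Icc] at hT'law
    have hid : IdentDistrib T' T μ μ :=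
      ⟨hT'.aemeasurable, hT.aemeasurable, hT'law.trans hTlaw.symm⟩
    have hcdf := condExp_indicator_le_ae_eq_condExp_cdf hX hT hT' hT'ind
    rw [hid.map_eq] at hcdf
    exact ⟨T, T', hT, hT', hid, hT'ind, (hcdf.trans (condExp_congr_ae
      (cdf_comp_ae_eq_of_map_eq_unitUniform hT.aemeasurable hTlaw))).trans_le hTP⟩
  · rintro ⟨T, T', hT, hT', hid, hind, hle⟩
    refine isPStarVar_of_condExp_cdf_le hX.comap_le hT ?_
    rw [← hid.map_eq]
    exact (condExp_indicator_le_ae_eq_condExp_cdf hX hT hT' hind).symm.trans_le hle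
end

section
/- Let T be any random variable and T' an independent copy of T (identically distributed as T and independent of T). Then the random variable P̃ := (1/2)·ℙ(T' ≤ T | T) + (1/2)·ℙ(T' < T | T) is a p*-variable. -/
open MeasureTheory ProbabilityTheory

open Set
open scoped unitInterval

/-! Let `ν` be the law of `T` and `W` a uniform weight independent of `T`. The randomised value
`R = (1 - W) ν (Iio T) + W ν (Iic T)` is uniform on `[0, 1]`, and averaging over `W` gives
`E[R | T] = (ν (Iic T) + ν (Iio T)) / 2`, which is `P̃` because `T'` has law `ν` and is independent
of `T`. For concave `f`, Jensen's inequality then yields `E[f(U)] = E[f(R)] ≤ E[f(P̃)]`.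

For the uniformity of `R` it suffices to show `ℙ(R ≤ v) ≤ v`: reversing the order and replacing `W`
by `1 - W` turns `R` into `1 - R`, so the same bound gives `ℙ(R ≥ v) ≤ 1 - v`. -/

lemma measurePreserving_toDual {α : Type*} [MeasurableSpace α] (ν : Measure α) :
    MeasurePreserving OrderDual.toDual ν (ν.map OrderDual.toDual) :=
  ⟨measurable_id, rfl⟩

instance isProbabilityMeasure_map_toDual {α : Type*} [MeasurableSpace α] (ν : Measure α)
    [IsProbabilityMeasure ν] : IsProbabilityMeasure (ν.map OrderDual.toDual) :=
  Measure.isProbabilityMeasure_map measurable_id.aemeasurable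

lemma integrable_continuous_comp {γ X : Type*} [MeasurableSpace γ] {ρ : Measure γ}
    [IsFiniteMeasure ρ] [TopologicalSpace X] [CompactSpace X] [MeasurableSpace X]
    [OpensMeasurableSpace X] {φ : X → ℝ} (hφ : Continuous φ) {g : γ → X} (hg : Measurable g) :
    Integrable (fun x => φ (g x)) ρ := by
  obtain ⟨C, hC⟩ := isCompact_univ.exists_bound_of_continuousOn hφ.continuousOn
  exact .of_bound (hφ.measurable.comp hg).aestronglyMeasurable C
    (ae_of_all _ fun x => hC _ (mem_univ _))

lemma integral_coe_unitInterval : ∫ w : I, (w : ℝ) = 1 / 2 := by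
  rw [integral_subtype measurableSet_Icc fun w => w, integral_Icc_eq_integral_Ioc,
    ← intervalIntegral.integral_of_le zero_le_one, integral_id]
  norm_num

lemma measure_le_of_forall_measure_Iic_le {α : Type*} [MeasurableSpace α] [LinearOrder α]
    [TopologicalSpace α] [ClosedIciTopology α] [SecondCountableTopology α] {ν : Measure α}
    {s : Set α} {c : ENNReal} (h : ∀ t ∈ s, ν (Iic t) ≤ c) : ν s ≤ c := by
  by_cases hmax : ∃ t, IsGreatest s t
  · obtain ⟨t, hts, ht⟩ := hmax
    exact (measure_mono ht).trans (h t hts)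
  · -- Without a greatest element, `s` is covered by countably many of the rays `Iio t`, `t ∈ s`.
    obtain ⟨C, hCs, hC, hCu⟩ :=
      TopologicalSpace.isOpen_biUnion_countable s Iio fun _ _ => isOpen_Iio
    have hcover : s ⊆ ⋃ t ∈ C, Iio t := by
      rw [hCu]
      intro t ht
      obtain ⟨u, hu, htu⟩ : ∃ u ∈ s, t < u := by
        by_contra! hle
        exact hmax ⟨t, ht, hle⟩
      exact mem_biUnion hu htu
    have hdir : DirectedOn (Function.onFun (· ⊆ ·) Iio) C := fun t ht u hu =>
      ⟨max t u, max_rec' (· ∈ C) ht hu, Iio_subset_Iio (le_max_left t u),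
        Iio_subset_Iio (le_max_right t u)⟩
    calc ν s ≤ ν (⋃ t ∈ C, Iio t) := measure_mono hcover
      _ = ⨆ t ∈ C, ν (Iio t) := measure_biUnion_eq_iSup hC hdir
      _ ≤ c := iSup₂_le fun t ht => (measure_mono Iio_subset_Iic_self).trans (h t (hCs ht))

section DistributionalTransform

variable {α : Type*} [MeasurableSpace α] [LinearOrder α]

/-- The mid-distribution function of `ν`: the average of its left- and right-continuous cumulative
distribution functions. -/
noncomputable def midCDF (ν : Measure α) (t : α) : ℝ :=
  (1 / 2) * ν.real (Iic t) + (1 / 2) * ν.real (Iio t)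

/-- The distributional transform of `ν`: the pair `(t, w)` is sent to the point that divides the
interval `[ν (Iio t), ν (Iic t)]` in the ratio `w : 1 - w`, so that a uniform `w` spreads each atom
evenly over its jump. -/
noncomputable def distribTransform (ν : Measure α) [IsProbabilityMeasure ν] (p : α × I) : I :=
  ⟨(1 - p.2) * ν.real (Iio p.1) + p.2 * ν.real (Iic p.1),
    convex_Icc (0 : ℝ) 1 ⟨measureReal_nonneg, measureReal_le_one⟩
      ⟨measureReal_nonneg, measureReal_le_one⟩ (unitInterval.one_minus_nonneg _)
      (unitInterval.nonneg _) (sub_add_cancel _ _)⟩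

lemma coe_distribTransform (ν : Measure α) [IsProbabilityMeasure ν] (t : α) (w : I) :
    (distribTransform ν (t, w) : ℝ) = (1 - w) * ν.real (Iio t) + w * ν.real (Iic t) := rfl

lemma measureReal_Iio_le_distribTransform (ν : Measure α) [IsProbabilityMeasure ν] (t : α)
    (w : I) : ν.real (Iio t) ≤ distribTransform ν (t, w) := by
  have h : ν.real (Iio t) ≤ ν.real (Iic t) := measureReal_mono Iio_subset_Iic_self
  rw [coe_distribTransform]
  nlinarith [unitInterval.nonneg w]

lemma continuous_distribTransform_right (ν : Measure α) [IsProbabilityMeasure ν] (t : α) :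
    Continuous fun w => distribTransform ν (t, w) := by
  refine Continuous.subtype_mk ?_ _
  fun_prop

lemma midCDF_eq_distribTransform (ν : Measure α) [IsProbabilityMeasure ν] (t : α) :
    midCDF ν t = distribTransform ν (t, ⟨1 / 2, by norm_num, by norm_num⟩) := by
  rw [coe_distribTransform, midCDF]
  ring

lemma integral_distribTransform_right (ν : Measure α) [IsProbabilityMeasure ν] (t : α) :
    ∫ w, (distribTransform ν (t, w) : ℝ) = midCDF ν t := by
  have hcoe : Integrable fun w : I => (w : ℝ) :=
    integrable_continuous_comp continuous_subtype_val measurable_id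
  calc ∫ w, (distribTransform ν (t, w) : ℝ)
      = ∫ w : I, (ν.real (Iio t) + w * (ν.real (Iic t) - ν.real (Iio t))) := by
        congr with w
        rw [coe_distribTransform]
        ring
    _ = midCDF ν t := by
        rw [integral_add (integrable_const _) (hcoe.mul_const _), integral_mul_const,
          integral_coe_unitInterval, integral_const, probReal_univ, one_smul, midCDF]
        ring

variable [TopologicalSpace α] [OrderClosedTopology α] [BorelSpace α]

lemma measurable_distribTransform (ν : Measure α) [IsProbabilityMeasure ν] :
    Measurable (distribTransform ν) := by
  have hIio : Measurable fun t => ν.real (Iio t) :=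
    Monotone.measurable fun _ _ h => measureReal_mono (Iio_subset_Iio h)
  have hIic : Measurable fun t => ν.real (Iic t) :=
    Monotone.measurable fun _ _ h => measureReal_mono (Iic_subset_Iic.2 h)
  have hw : Measurable fun p : α × I => (p.2 : ℝ) := by fun_prop
  exact (((measurable_const.sub hw).mul (hIio.comp measurable_fst)).add
    (hw.mul (hIic.comp measurable_fst))).subtype_mk

lemma prod_preimage_distribTransform_Iic_le_of_jump (ν : Measure α)
    [IsProbabilityMeasure ν] {v : I} {q : α} (hqv : ν.real (Iio q) ≤ v) (hvq : v < ν.real (Iic q)) :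
    ν.prod volume (distribTransform ν ⁻¹' Iic v) ≤ ENNReal.ofReal v := by
  set a := ν.real (Iio q)
  set b := ν.real (Iic q)
  have hab : 0 < b - a := by linarith
  let r : I :=
    ⟨(v - a) / (b - a), div_nonneg (by linarith) hab.le, (div_le_one hab).2 (by linarith)⟩
  have hatom : ν.real {q} = b - a := by
    rw [← Iic_sdiff_Iio_same, measureReal_sdiff Iio_subset_Iic_self measurableSet_Iio]
  have hsub : distribTransform ν ⁻¹' Iic v ⊆ Iio q ×ˢ univ ∪ {q} ×ˢ Iic r := by
    rintro ⟨t, w⟩ htw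
    have htw : (distribTransform ν (t, w) : ℝ) ≤ v := htw
    rcases lt_trichotomy t q with htq | rfl | hqt
    · exact .inl ⟨htq, mem_univ w⟩
    · rw [coe_distribTransform] at htw
      exact .inr ⟨rfl, (le_div_iff₀ hab).2 (by linarith)⟩
    · have hbv : b ≤ v := (measureReal_mono (Iic_subset_Iio.2 hqt)).trans
        ((measureReal_Iio_le_distribTransform ν t w).trans htw)
      exact absurd hbv hvq.not_ge
  calc ν.prod volume (distribTransform ν ⁻¹' Iic v)
      ≤ ν (Iio q) * 1 + ν {q} * volume (Iic r) := by
        rw [← measure_univ (μ := (volume : Measure I)), ← Measure.prod_prod, ← Measure.prod_prod]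
        exact (measure_mono hsub).trans (measure_union_le _ _)
    _ = ENNReal.ofReal (a + (b - a) * r) := by
        rw [mul_one, unitInterval.volume_Iic, ← ofReal_measureReal (s := Iio q),
          ← ofReal_measureReal (s := {q}), hatom, ← ENNReal.ofReal_mul hab.le,
          ← ENNReal.ofReal_add measureReal_nonneg (mul_nonneg hab.le r.2.1)]
    _ = ENNReal.ofReal v := by rw [mul_div_cancel₀ _ hab.ne', add_sub_cancel]

lemma distribTransform_dual (ν : Measure α) [IsProbabilityMeasure ν] (t : α) (w : I) :
    distribTransform (ν.map OrderDual.toDual) (OrderDual.toDual t, σ w) =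
      σ (distribTransform ν (t, w)) := by
  have hIio : (ν.map OrderDual.toDual).real (Iio (OrderDual.toDual t)) = 1 - ν.real (Iic t) := by
    rw [← (measurePreserving_toDual ν).measureReal_preimage measurableSet_Iio.nullMeasurableSet,
      ← probReal_compl_eq_one_sub measurableSet_Iic, compl_Iic]
    rfl
  have hIic : (ν.map OrderDual.toDual).real (Iic (OrderDual.toDual t)) = 1 - ν.real (Iio t) := by
    rw [← (measurePreserving_toDual ν).measureReal_preimage measurableSet_Iic.nullMeasurableSet,
      ← probReal_compl_eq_one_sub measurableSet_Iio, compl_Iio]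
    rfl
  ext
  rw [unitInterval.coe_symm_eq, coe_distribTransform, coe_distribTransform, hIio, hIic,
    unitInterval.coe_symm_eq]
  ring

lemma integrable_comp_midCDF (ν : Measure α) [IsProbabilityMeasure ν] {f : ℝ → ℝ}
    (hfc : ContinuousOn f I) : Integrable (fun t => f (midCDF ν t)) ν := by
  simp only [midCDF_eq_distribTransform]
  exact integrable_continuous_comp hfc.domRestrict
    ((measurable_distribTransform ν).comp measurable_prodMk_right)

variable [SecondCountableTopology α]

lemma prod_preimage_distribTransform_Iic_le (ν : Measure α) [IsProbabilityMeasure ν] (v : I) :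
    ν.prod volume (distribTransform ν ⁻¹' Iic v) ≤ ENNReal.ofReal v := by
  by_cases! hjump : ∃ q, ν.real (Iio q) ≤ v ∧ v < ν.real (Iic q)
  · obtain ⟨q, hqv, hvq⟩ := hjump
    exact prod_preimage_distribTransform_Iic_le_of_jump ν hqv hvq
  · have hsub : distribTransform ν ⁻¹' Iic v ⊆ {t | ν.real (Iio t) ≤ v} ×ˢ univ :=
      fun p hp => ⟨(measureReal_Iio_le_distribTransform ν p.1 p.2).trans hp, mem_univ _⟩
    calc ν.prod volume (distribTransform ν ⁻¹' Iic v)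
        ≤ ν {t | ν.real (Iio t) ≤ v} := by
          simpa using measure_mono (μ := ν.prod volume) hsub
      _ ≤ ENNReal.ofReal v := measure_le_of_forall_measure_Iic_le fun t ht => by
          rw [← ofReal_measureReal]
          exact ENNReal.ofReal_le_ofReal (hjump t ht)

lemma prod_preimage_distribTransform_Ici_le (ν : Measure α) [IsProbabilityMeasure ν] (v : I) :
    ν.prod volume (distribTransform ν ⁻¹' Ici v) ≤ ENNReal.ofReal (1 - v) := by
  have hdual : MeasurePreserving (Prod.map OrderDual.toDual σ) (ν.prod volume)
      ((ν.map OrderDual.toDual).prod volume) :=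
    (measurePreserving_toDual ν).prod unitInterval.measurePreserving_symm
  have hpre : Prod.map OrderDual.toDual σ ⁻¹'
      (distribTransform (ν.map OrderDual.toDual) ⁻¹' Iic (σ v)) = distribTransform ν ⁻¹' Ici v := by
    ext ⟨t, w⟩
    simp [distribTransform_dual]
  rw [← hpre, hdual.measure_preimage
    (measurable_distribTransform _ measurableSet_Iic).nullMeasurableSet]
  exact prod_preimage_distribTransform_Iic_le _ (σ v)

lemma map_distribTransform (ν : Measure α) [IsProbabilityMeasure ν] :
    (ν.prod volume).map (distribTransform ν) = volume := by
  have hmeas := measurable_distribTransform ν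
  have : IsProbabilityMeasure ((ν.prod volume).map (distribTransform ν)) :=
    Measure.isProbabilityMeasure_map hmeas.aemeasurable
  refine Measure.ext_of_Iic _ _ fun v => le_antisymm ?_ ?_
  · rw [Measure.map_apply hmeas measurableSet_Iic, unitInterval.volume_Iic]
    exact prod_preimage_distribTransform_Iic_le ν v
  · rw [← compl_Ioi, prob_compl_eq_one_sub measurableSet_Ioi,
      prob_compl_eq_one_sub measurableSet_Ioi, Measure.map_apply hmeas measurableSet_Ioi,
      unitInterval.volume_Ioi]
    exact tsub_le_tsub_left ((measure_mono (preimage_mono Ioi_subset_Ici_self)).trans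
      (prod_preimage_distribTransform_Ici_le ν v)) 1

lemma integral_le_integral_midCDF (ν : Measure α) [IsProbabilityMeasure ν] {f : ℝ → ℝ}
    (hf : ConcaveOn ℝ I f) (hfc : ContinuousOn f I) :
    ∫ u in (0 : ℝ)..1, f u ≤ ∫ t, f (midCDF ν t) ∂ν := by
  have hmeas := measurable_distribTransform ν
  have hfI : Continuous fun u : I => f u := hfc.domRestrict
  calc ∫ u in (0 : ℝ)..1, f u = ∫ u : I, f u := by
        rw [integral_subtype measurableSet_Icc, integral_Icc_eq_integral_Ioc,
          intervalIntegral.integral_of_le zero_le_one]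
    _ = ∫ p, f (distribTransform ν p) ∂ν.prod volume := by
        rw [← integral_map hmeas.aemeasurable hfI.aestronglyMeasurable, map_distribTransform]
    _ = ∫ t, (∫ w, f (distribTransform ν (t, w))) ∂ν :=
        integral_prod _ (integrable_continuous_comp hfI hmeas)
    _ ≤ ∫ t, f (midCDF ν t) ∂ν := by
        refine integral_mono (integrable_continuous_comp hfI hmeas).integral_prod_left
          (integrable_comp_midCDF ν hfc) fun t => ?_
        have hw := (continuous_distribTransform_right ν t).measurable
        rw [← integral_distribTransform_right]
        exact hf.le_map_integral hfc isClosed_Icc (ae_of_all _ fun w => (distribTransform ν _).2)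
          (integrable_continuous_comp continuous_subtype_val hw)
          (integrable_continuous_comp hfI hw)

end DistributionalTransform

lemma condExp_prodMk_of_indepFun {Ω α β E : Type*} [MeasurableSpace Ω] [MeasurableSpace α]
    [MeasurableSpace β] [NormedAddCommGroup E] [NormedSpace ℝ E] [CompleteSpace E]
    {μ : Measure Ω} [IsProbabilityMeasure μ] {X : Ω → α} {Y : Ω → β} (hX : Measurable X)
    (hY : AEMeasurable Y μ) (hXY : IndepFun X Y μ) {g : α × β → E} (hg : StronglyMeasurable g)
    (hgi : Integrable (fun ω => g (X ω, Y ω)) μ) :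
    μ[fun ω => g (X ω, Y ω) | MeasurableSpace.comap X inferInstance]
      =ᵐ[μ] fun ω => ∫ y, g (X ω, y) ∂μ.map Y := by
  have : IsProbabilityMeasure (μ.map Y) := Measure.isProbabilityMeasure_map hY
  have hXYm : AEMeasurable (fun ω => (X ω, Y ω)) μ := hX.aemeasurable.prodMk hY
  have hlaw : μ.map (fun ω => (X ω, Y ω)) = (μ.map X).prod (μ.map Y) :=
    (indepFun_iff_map_prod_eq_prod_map_map hX.aemeasurable hY).1 hXY
  have hgp : Integrable g ((μ.map X).prod (μ.map Y)) := by
    rw [← hlaw]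
    exact (integrable_map_measure hg.aestronglyMeasurable hXYm).2 hgi
  have hsection : StronglyMeasurable fun x => ∫ y, g (x, y) ∂μ.map Y := hg.integral_prod_right'
  symm
  refine ae_eq_condExp_of_forall_setIntegral_eq hX.comap_le hgi
    (fun _ _ _ => (hgp.integral_prod_left.comp_measurable hX).integrableOn) ?_
    (hsection.comp_measurable (comap_measurable X)).aestronglyMeasurable
  rintro _ ⟨B, hB, rfl⟩ -
  calc ∫ ω in X ⁻¹' B, ∫ y, g (X ω, y) ∂μ.map Y ∂μ
      = ∫ x in B, ∫ y, g (x, y) ∂μ.map Y ∂μ.map X :=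
        (setIntegral_map hB hsection.aestronglyMeasurable hX.aemeasurable).symm
    _ = ∫ p in B ×ˢ univ, g p ∂μ.map fun ω => (X ω, Y ω) := by
        rw [hlaw, setIntegral_prod _ hgp.integrableOn, Measure.restrict_univ]
    _ = ∫ ω in X ⁻¹' B, g (X ω, Y ω) ∂μ := by
        rw [setIntegral_map (hB.prod .univ) hg.aestronglyMeasurable hXYm, mk_preimage_prod,
          preimage_univ, inter_univ]

lemma condExp_indicator_prodMk_of_indepFun {Ω α β : Type*} [MeasurableSpace Ω] [MeasurableSpace α]
    [MeasurableSpace β] {μ : Measure Ω} [IsProbabilityMeasure μ] {X : Ω → α} {Y : Ω → β}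
    (hX : Measurable X) (hY : AEMeasurable Y μ) (hXY : IndepFun X Y μ) {s : Set (α × β)}
    (hs : MeasurableSet s) :
    μ[{ω | (X ω, Y ω) ∈ s}.indicator fun _ => (1 : ℝ) | MeasurableSpace.comap X inferInstance]
      =ᵐ[μ] fun ω => (μ.map Y).real (Prod.mk (X ω) ⁻¹' s) := by
  have hone : StronglyMeasurable (s.indicator fun _ => (1 : ℝ)) :=
    stronglyMeasurable_const.indicator hs
  have hint : Integrable (fun ω => s.indicator (fun _ => (1 : ℝ)) (X ω, Y ω)) μ :=
    (integrable_map_measure hone.aestronglyMeasurable (hX.aemeasurable.prodMk hY)).1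
      ((integrable_const 1).indicator hs)
  refine (condExp_prodMk_of_indepFun hX hY hXY hone hint).trans (.of_eq ?_)
  ext ω
  exact integral_indicator_one (measurable_prodMk_left hs)

theorem isPStarVar_half_cdf_average_general {Ω α : Type*} [MeasurableSpace Ω]
    [MeasurableSpace α] [LinearOrder α] [TopologicalSpace α] [OrderClosedTopology α]
    [SecondCountableTopology α] [BorelSpace α] (μ : Measure Ω) [IsProbabilityMeasure μ]
    (T T' : Ω → α) (hT : Measurable T) (hid : IdentDistrib T' T μ μ) (hind : IndepFun T' T μ)
    {f : ℝ → ℝ} (hf : ConcaveOn ℝ I f) (hfc : ContinuousOn f I) :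
    ∫ u in (0:ℝ)..1, f u ≤ ∫ ω, f (
      (1/2) * (μ[Set.indicator {ω' | T' ω' ≤ T ω'} (fun _ => (1:ℝ)) |
          MeasurableSpace.comap T inferInstance]) ω +
      (1/2) * (μ[Set.indicator {ω' | T' ω' < T ω'} (fun _ => (1:ℝ)) |
          MeasurableSpace.comap T inferInstance]) ω) ∂μ := by
  have : IsProbabilityMeasure (μ.map T) := Measure.isProbabilityMeasure_map hT.aemeasurable
  have hle := condExp_indicator_prodMk_of_indepFun hT hid.aemeasurable_fst hind.symm
    (measurableSet_le measurable_snd measurable_fst)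
  have hlt := condExp_indicator_prodMk_of_indepFun hT hid.aemeasurable_fst hind.symm
    (measurableSet_lt measurable_snd measurable_fst)
  rw [hid.map_eq] at hle hlt
  calc ∫ u in (0 : ℝ)..1, f u
      ≤ ∫ t, f (midCDF (μ.map T) t) ∂μ.map T := integral_le_integral_midCDF _ hf hfc
    _ = ∫ ω, f (midCDF (μ.map T) (T ω)) ∂μ :=
        integral_map hT.aemeasurable (integrable_comp_midCDF _ hfc).aestronglyMeasurable
    _ = _ := by
        refine integral_congr_ae ?_
        filter_upwards [hle, hlt] with ω hωle hωlt
        rw [hωle, hωlt]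
        rfl

/-- **Theorem (frequentist interpretation).** For any random variable `T` and an independent
copy `T'` of `T`, the midway tie-broken exceedance probability
`P̃ = (1/2)·ℙ(T' ≤ T | T) + (1/2)·ℙ(T' < T | T)` is a p*-variable. -/
theorem isPStarVar_half_cdf_average
    {Ω : Type*} [MeasurableSpace Ω] (μ : Measure Ω) [IsProbabilityMeasure μ]
    (T T' : Ω → ℝ) (hT : Measurable T) (hT' : Measurable T')
    (hid : IdentDistrib T' T μ μ) (hind : IndepFun T' T μ) :
    IsPStarVar μ (fun ω =>
      (1/2) * (μ[Set.indicator {ω' | T' ω' ≤ T ω'} (fun _ => (1:ℝ)) |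
          MeasurableSpace.comap T inferInstance]) ω +
      (1/2) * (μ[Set.indicator {ω' | T' ω' < T ω'} (fun _ => (1:ℝ)) |
          MeasurableSpace.comap T inferInstance]) ω) :=
  fun _ _ hf _ _ => isPStarVar_half_cdf_average_general μ T T' hT hid hind
    (hf.subset (subset_univ I) (convex_Icc 0 1))
    ((hf.continuousOn isOpen_univ).mono (subset_univ I))
end

section
/- Let α ∈ (0,1/2] and let V be an α-random threshold, and let V* be a random variable uniformly distributed on [0,2α]. Then E[f(V)] ≥ E[f(V*)] for every convex function f : ℝ → ℝ for which both expectations exist; in particular Var(V) ≥ α²/3, and this smallest variance is attained by V*. -/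
open MeasureTheory ProbabilityTheory

/-- `V` is an `α`-random threshold: a `(0,1)`-valued random variable with mean `α` whose
distribution has a decreasing density on `(0,1)`. -/
def IsAlphaRandomThreshold {Ω : Type*} [MeasurableSpace Ω] (μ : Measure Ω) (α : ℝ)
    (V : Ω → ℝ) : Prop :=
  Measurable V ∧ (∀ ω, V ω ∈ Set.Ioo (0:ℝ) 1) ∧ (∫ ω, V ω ∂μ = α) ∧
  ∃ h : ℝ → ℝ, Measurable h ∧ AntitoneOn h (Set.Ioo 0 1) ∧
    (∀ x ∈ Set.Ioo (0:ℝ) 1, 0 ≤ h x) ∧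
    ∀ s : Set ℝ, MeasurableSet s → s ⊆ Set.Ioo 0 1 →
      μ.map V s = ENNReal.ofReal (∫ x in s, h x)

/-!
Let `U` be the uniform law on `[0, b]` with the same mean as the law of `V`. The decreasing density
of `V` crosses the level `b⁻¹` at some `t ∈ [0, b]`, so, compared with the density of `U`, it is
larger on `(0, t)`, smaller on `(t, b)` and larger again on `(b, ∞)`. A convex `f` lies below the
line through `(t, f t)` and `(b, f b)` on `(t, b)` and above it elsewhere, so the integral of `f`
minus this line is at least as large against the law of `V` as against `U`. The two laws have the
same mean, hence integrate the line to the same value.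
-/

open scoped NNReal

/-- For `a < b` the line is the chord of `f` over `[a, b]`; for `a = b` it is a supporting line. -/
lemma exists_affine_crossing_of_convexOn {f : ℝ → ℝ} (hf : ConvexOn ℝ Set.univ f) {a b : ℝ}
    (hab : a ≤ b) :
    ∃ p q : ℝ, (∀ x ∈ Set.Icc a b, f x ≤ p * x + q) ∧ ∀ x ∉ Set.Ioo a b, p * x + q ≤ f x := by
  let slopeFrom : ℝ → ℝ := fun x => (f x - f a) / (x - a)
  have slopeFrom_mono : ∀ x ≠ a, ∀ y ≠ a, x ≤ y → slopeFrom x ≤ slopeFrom y := fun x hx y hy hxy =>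
    hf.secant_mono (Set.mem_univ a) (Set.mem_univ x) (Set.mem_univ y) hx hy hxy
  obtain ⟨p, hp_ge, hp_le⟩ : (upperBounds (slopeFrom '' (Set.Iic b \ {a})) ∩
      lowerBounds (slopeFrom '' (Set.Ici b \ {a}))).Nonempty := by
    refine exists_between_of_forall_le
      (.image _ ⟨a - 1, (sub_one_lt a).le.trans hab, (sub_one_lt a).ne⟩)
      (.image _ ⟨b + 1, (lt_add_one b).le, (hab.trans_lt (lt_add_one b)).ne'⟩) ?_
    rintro _ ⟨x, ⟨hxb, hxa⟩, rfl⟩ _ ⟨y, ⟨hby, hya⟩, rfl⟩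
    exact slopeFrom_mono x hxa y hya (hxb.trans hby)
  have slopeFrom_le : ∀ x ≤ b, x ≠ a → slopeFrom x ≤ p := fun x hxb hxa =>
    hp_ge ⟨x, ⟨hxb, hxa⟩, rfl⟩
  have le_slopeFrom : ∀ x, b ≤ x → x ≠ a → p ≤ slopeFrom x := fun x hbx hxa =>
    hp_le ⟨x, ⟨hbx, hxa⟩, rfl⟩
  refine ⟨p, f a - p * a, fun x hx => ?_, fun x hx => ?_⟩
  · rcases hx.1.eq_or_lt with rfl | hax
    · linarith
    · have := (div_le_iff₀ (sub_pos.2 hax)).1 (slopeFrom_le x hx.2 hax.ne')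
      linarith
  · rcases lt_trichotomy x a with hxa | rfl | hax
    · have := (div_le_iff_of_neg (sub_neg.2 hxa)).1 (slopeFrom_le x (hxa.le.trans hab) hxa.ne)
      linarith
    · linarith
    · have hbx : b ≤ x := not_lt.1 fun hxb => hx ⟨hax, hxb⟩
      have := (le_div_iff₀ (sub_pos.2 hax)).1 (le_slopeFrom x hbx hax.ne')
      linarith

lemma exists_level_crossing_of_antitoneOn {β γ : Type*} [ConditionallyCompleteLinearOrder β]
    [LinearOrder γ] {h : β → γ} {a b : β} (hab : a ≤ b) (hh : AntitoneOn h (Set.Ioo a b)) (c : γ) :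
    ∃ t ∈ Set.Icc a b, (∀ x ∈ Set.Ioo a t, c ≤ h x) ∧ ∀ x ∈ Set.Ioo t b, h x ≤ c := by
  obtain ⟨t, ht_ge, ht_le⟩ : (upperBounds (insert a {x ∈ Set.Ioo a b | c < h x}) ∩
      lowerBounds (insert b {x ∈ Set.Ioo a b | h x < c})).Nonempty := by
    refine exists_between_of_forall_le (Set.insert_nonempty _ _) (Set.insert_nonempty _ _) ?_
    rintro x (rfl | ⟨hx, hcx⟩) y (rfl | ⟨hy, hyc⟩)
    · exact hab
    · exact hy.1.le
    · exact hx.2.le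
    · exact le_of_not_ge fun hyx => ((hyc.trans hcx).trans_le (hh hy hx hyx)).false
  have hat : a ≤ t := ht_ge (Set.mem_insert _ _)
  have htb : t ≤ b := ht_le (Set.mem_insert _ _)
  refine ⟨t, ⟨hat, htb⟩, fun x hx => ?_, fun x hx => ?_⟩
  · exact not_lt.1 fun hxc => hx.2.not_ge (ht_le (.inr ⟨⟨hx.1, hx.2.trans_le htb⟩, hxc⟩))
  · exact not_lt.1 fun hcx => hx.1.not_ge (ht_ge (.inr ⟨⟨hat.trans_lt hx.1, hx.2⟩, hcx⟩))

lemma antitoneOn_indicator_Ioo {β γ : Type*} [LinearOrder β] [Preorder γ] [Zero γ] {h : β → γ}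
    {a b : β} (hh : AntitoneOn h (Set.Ioo a b)) (hnonneg : ∀ x ∈ Set.Ioo a b, 0 ≤ h x) :
    AntitoneOn ((Set.Ioo a b).indicator h) (Set.Ioi a) := by
  intro x hx y hy hxy
  by_cases hyb : y < b
  · have hx_mem : x ∈ Set.Ioo a b := ⟨hx, hxy.trans_lt hyb⟩
    have hy_mem : y ∈ Set.Ioo a b := ⟨hy, hyb⟩
    rw [Set.indicator_of_mem hx_mem, Set.indicator_of_mem hy_mem]
    exact hh hx_mem hy_mem hxy
  · rw [Set.indicator_of_notMem fun hy_mem => hyb hy_mem.2]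
    exact Set.indicator_nonneg hnonneg x

lemma integral_affine {ν : Measure ℝ} [IsProbabilityMeasure ν] (hν : Integrable (fun x => x) ν)
    (p q : ℝ) : ∫ x, (p * x + q) ∂ν = p * ∫ x, x ∂ν + q := by
  rw [integral_add (hν.const_mul p) (integrable_const q), integral_const_mul]
  simp

/-- The Karlin–Novikoff cut criterion for the convex order. -/
theorem integral_withDensity_le_of_convexOn_of_cut {ρ : Measure ℝ} {g h : ℝ → ℝ≥0}
    (hg : AEMeasurable g ρ) (hh : AEMeasurable h ρ)
    [IsProbabilityMeasure (ρ.withDensity fun x => g x)]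
    [IsProbabilityMeasure (ρ.withDensity fun x => h x)]
    (hg_id : Integrable (fun x => x) (ρ.withDensity fun x => g x))
    (hh_id : Integrable (fun x => x) (ρ.withDensity fun x => h x))
    (hmean : ∫ x, x ∂(ρ.withDensity fun x => g x) = ∫ x, x ∂(ρ.withDensity fun x => h x))
    {a b : ℝ} (hab : a ≤ b) (houter : ∀ᵐ x ∂ρ, x ∉ Set.Icc a b → g x ≤ h x)
    (hinner : ∀ᵐ x ∂ρ, x ∈ Set.Ioo a b → h x ≤ g x)
    {f : ℝ → ℝ} (hf : ConvexOn ℝ Set.univ f)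
    (hgf : Integrable f (ρ.withDensity fun x => g x))
    (hhf : Integrable f (ρ.withDensity fun x => h x)) :
    ∫ x, f x ∂(ρ.withDensity fun x => g x) ≤ ∫ x, f x ∂(ρ.withDensity fun x => h x) := by
  obtain ⟨p, q, hf_le, hle_f⟩ := exists_affine_crossing_of_convexOn hf hab
  have hg_line := (hg_id.const_mul p).add (integrable_const q)
  have hh_line := (hh_id.const_mul p).add (integrable_const q)
  have hexcess : ∫ x, (f x - (p * x + q)) ∂(ρ.withDensity fun x => g x)
      ≤ ∫ x, (f x - (p * x + q)) ∂(ρ.withDensity fun x => h x) := by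
    rw [integral_withDensity_eq_integral_smul₀ hg, integral_withDensity_eq_integral_smul₀ hh]
    refine integral_mono_ae
      ((integrable_withDensity_iff_integrable_smul₀ hg).1 (hgf.sub hg_line))
      ((integrable_withDensity_iff_integrable_smul₀ hh).1 (hhf.sub hh_line)) ?_
    filter_upwards [houter, hinner] with x hx_outer hx_inner
    simp only [NNReal.smul_def, smul_eq_mul]
    by_cases hx : x ∈ Set.Icc a b
    · by_cases hx' : x ∈ Set.Ioo a b
      · exact mul_le_mul_of_nonpos_right (NNReal.coe_le_coe.2 (hx_inner hx'))
          (sub_nonpos.2 (hf_le x hx))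
      · have hfx : f x - (p * x + q) = 0 := sub_eq_zero.2 (le_antisymm (hf_le x hx) (hle_f x hx'))
        simp only [hfx, mul_zero, le_refl]
    · exact mul_le_mul_of_nonneg_right (NNReal.coe_le_coe.2 (hx_outer hx))
        (sub_nonneg.2 (hle_f x fun hx' => hx (Set.Ioo_subset_Icc_self hx')))
  have hsub_g := integral_sub hgf hg_line
  have hsub_h := integral_sub hhf hh_line
  simp only [Pi.add_apply] at hsub_g hsub_h
  rw [hsub_g, hsub_h, integral_affine hg_id, integral_affine hh_id, hmean] at hexcess
  linarith

section Uniform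

variable {a b : ℝ}

lemma isProbabilityMeasure_cond_Icc (hab : a < b) :
    IsProbabilityMeasure volume[|Set.Icc a b] :=
  cond_isProbabilityMeasure_of_finite (by simp [hab]) (by simp)

lemma integrable_cond_Icc_of_continuous (hab : a < b) {φ : ℝ → ℝ} (hφ : Continuous φ) :
    Integrable φ volume[|Set.Icc a b] :=
  (hφ.integrableOn_Icc (μ := volume)).smul_measure (by simp [hab])

lemma integral_cond_Icc (hab : a ≤ b) (φ : ℝ → ℝ) :
    ∫ x, φ x ∂volume[|Set.Icc a b] = (b - a)⁻¹ * ∫ x in a..b, φ x := by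
  rw [ProbabilityTheory.cond, integral_smul_measure, intervalIntegral.integral_of_le hab,
    integral_Icc_eq_integral_Ioc, Real.volume_Icc, ENNReal.toReal_inv,
    ENNReal.toReal_ofReal (sub_nonneg.2 hab), smul_eq_mul]

lemma integral_id_cond_Icc (hab : a < b) :
    ∫ x, x ∂volume[|Set.Icc a b] = (a + b) / 2 := by
  have : b - a ≠ 0 := (sub_pos.2 hab).ne'
  rw [integral_cond_Icc hab.le, integral_id]
  field_simp
  ring

lemma variance_id_cond_Icc (hab : a < b) :
    Var[id; volume[|Set.Icc a b]] = (b - a) ^ 2 / 12 := by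
  have : b - a ≠ 0 := (sub_pos.2 hab).ne'
  rw [variance_eq_integral aemeasurable_id]
  simp only [id, integral_id_cond_Icc hab]
  rw [integral_cond_Icc hab.le,
    intervalIntegral.integral_comp_sub_right (fun x => x ^ 2), integral_pow]
  field_simp
  ring

lemma cond_Icc_zero_eq_withDensity (hb : 0 < b) :
    volume[|Set.Icc 0 b] = (volume.restrict (Set.Ioi 0)).withDensity
      fun x => ((Set.Iic b).indicator (fun _ => b⁻¹.toNNReal) x : ℝ≥0) := by
  have hcoe : (fun x => (((Set.Iic b).indicator (fun _ => b⁻¹.toNNReal) x : ℝ≥0) : ENNReal)) =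
      (Set.Iic b).indicator fun _ => ENNReal.ofReal b⁻¹ := by
    ext x
    exact ENNReal.coe_indicator _ _ _
  rw [hcoe, withDensity_indicator measurableSet_Iic, withDensity_const,
    Measure.restrict_restrict measurableSet_Iic, Set.Iic_inter_Ioi, ProbabilityTheory.cond,
    Real.volume_Icc, sub_zero, ENNReal.ofReal_inv_of_pos hb, restrict_Ioc_eq_restrict_Icc]

end Uniform

/-- The measure `ν` on `ℝ` is concentrated on `(0, ∞)` and has a decreasing density there. The
density is `ℝ≥0`-valued, so that it is automatically nonnegative and finite. -/
def HasAntitoneDensity (ν : Measure ℝ) : Prop :=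
  ∃ h : ℝ → ℝ≥0, AntitoneOn h (Set.Ioi 0) ∧
    ν = (volume.restrict (Set.Ioi 0)).withDensity fun x => h x

namespace HasAntitoneDensity

variable {ν : Measure ℝ} [IsProbabilityMeasure ν] {b : ℝ}

theorem integral_cond_Icc_le (hν : HasAntitoneDensity ν) (hb : 0 < b) (hmean : ∫ x, x ∂ν = b / 2)
    {f : ℝ → ℝ} (hf : ConvexOn ℝ Set.univ f) (hfν : Integrable f ν) :
    ∫ x, f x ∂volume[|Set.Icc 0 b] ≤ ∫ x, f x ∂ν := by
  have hid : Integrable (fun x => x) ν := .of_integral_ne_zero (by rw [hmean]; positivity)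
  have hf_cont : Continuous f := continuousOn_univ.1 (hf.continuousOn isOpen_univ)
  have hf_unif := integrable_cond_Icc_of_continuous hb hf_cont
  have hid_unif := integrable_cond_Icc_of_continuous hb continuous_id
  have hmean_unif := integral_id_cond_Icc hb
  have hprob_unif := isProbabilityMeasure_cond_Icc hb
  obtain ⟨h, hanti, rfl⟩ := hν
  obtain ⟨t, ⟨-, htb⟩, hge, hle⟩ :=
    exists_level_crossing_of_antitoneOn hb.le (hanti.mono Set.Ioo_subset_Ioi_self) b⁻¹.toNNReal
  rw [cond_Icc_zero_eq_withDensity hb] at hprob_unif hf_unif hid_unif hmean_unif ⊢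
  refine integral_withDensity_le_of_convexOn_of_cut (a := t) (b := b)
    (aemeasurable_const.indicator measurableSet_Iic)
    (aemeasurable_restrict_of_antitoneOn measurableSet_Ioi hanti) hid_unif hid
    (by rw [hmean_unif, hmean, zero_add]) htb ?_ ?_ hf hf_unif hfν
  · filter_upwards [ae_restrict_mem measurableSet_Ioi] with x hx0 hx
    by_cases hxb : x ≤ b
    · rw [Set.indicator_of_mem (Set.mem_Iic.2 hxb)]
      exact hge x ⟨hx0, not_le.1 fun htx => hx ⟨htx, hxb⟩⟩
    · rw [Set.indicator_of_notMem (by simpa using hxb)]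
      exact zero_le
  · filter_upwards with x hx
    rw [Set.indicator_of_mem (Set.mem_Iic.2 hx.2.le)]
    exact hle x hx

theorem variance_id_cond_Icc_le (hν : HasAntitoneDensity ν) (hb : 0 < b)
    (hmean : ∫ x, x ∂ν = b / 2) (hν2 : MemLp id 2 ν) :
    Var[id; volume[|Set.Icc 0 b]] ≤ Var[id; ν] := by
  have hconv : ConvexOn ℝ Set.univ fun x : ℝ => (x - b / 2) ^ 2 := by
    simpa only [sub_eq_add_neg, Function.comp_def, Set.preimage_univ] using
      (even_two.convexOn_pow (𝕜 := ℝ)).translate_left (-(b / 2))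
  rw [variance_eq_integral aemeasurable_id, variance_eq_integral aemeasurable_id]
  simp only [id, hmean, integral_id_cond_Icc hb, zero_add]
  exact hν.integral_cond_Icc_le hb hmean hconv (hν2.sub (memLp_const (b / 2))).integrable_sq

end HasAntitoneDensity

namespace IsAlphaRandomThreshold

variable {Ω : Type*} [MeasurableSpace Ω] {μ : Measure Ω} {α : ℝ} {V : Ω → ℝ}

lemma memLp [IsFiniteMeasure μ] (hV : IsAlphaRandomThreshold μ α V) (p : ENNReal) : MemLp V p μ :=
  memLp_of_bounded (.of_forall fun ω => Set.Ioo_subset_Icc_self (hV.2.1 ω))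
    hV.1.aestronglyMeasurable p

lemma hasAntitoneDensity_map [NeZero μ] (hV : IsAlphaRandomThreshold μ α V) :
    HasAntitoneDensity (μ.map V) := by
  obtain ⟨hV_meas, hV_mem, -, h, -, hanti, hnonneg, hlaw⟩ := hV
  have hmap_inter : ∀ s, MeasurableSet s → μ.map V s = μ.map V (s ∩ Set.Ioo 0 1) := fun s hs => by
    rw [Measure.map_apply hV_meas hs, Measure.map_apply hV_meas (hs.inter measurableSet_Ioo),
      Set.preimage_inter, Set.preimage_eq_univ_iff.2 (Set.range_subset_iff.2 hV_mem),
      Set.inter_univ]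
  have hint : IntegrableOn h (Set.Ioo 0 1) := by
    by_contra hnot
    have hzero := hlaw _ measurableSet_Ioo subset_rfl
    rw [integral_undef hnot, ENNReal.ofReal_zero, ← Set.univ_inter (Set.Ioo (0 : ℝ) 1),
      ← hmap_inter _ .univ, Measure.measure_univ_eq_zero,
      Measure.map_eq_zero_iff hV_meas.aemeasurable] at hzero
    exact NeZero.ne μ hzero
  refine ⟨fun x => ((Set.Ioo 0 1).indicator h x).toNNReal,
    Real.toNNReal_monotone.comp_antitoneOn (antitoneOn_indicator_Ioo hanti hnonneg), ?_⟩
  have hcoe : (fun x => (((Set.Ioo 0 1).indicator h x).toNNReal : ENNReal)) =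
      (Set.Ioo 0 1).indicator fun x => ENNReal.ofReal (h x) :=
    (Set.indicator_comp_of_zero ENNReal.ofReal_zero).symm
  rw [hcoe, withDensity_indicator measurableSet_Ioo, Measure.restrict_restrict measurableSet_Ioo,
    Set.inter_eq_left.2 Set.Ioo_subset_Ioi_self]
  ext s hs
  rw [hmap_inter s hs, hlaw _ (hs.inter measurableSet_Ioo) Set.inter_subset_right,
    withDensity_apply _ hs, Measure.restrict_restrict hs,
    ofReal_integral_eq_lintegral_ofReal (hint.mono_set Set.inter_subset_right)]
  exact ae_restrict_of_forall_mem (hs.inter measurableSet_Ioo) fun x hx => hnonneg x hx.2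

end IsAlphaRandomThreshold

theorem uniform_minimizes_convex_order_among_thresholds_general
    {Ω Ω' : Type*} [MeasurableSpace Ω] [MeasurableSpace Ω']
    {μ : Measure Ω} [IsProbabilityMeasure μ] {μ' : Measure Ω'} {α : ℝ} (hα : 0 < α)
    {V : Ω → ℝ} (hV : HasAntitoneDensity (μ.map V)) (hVmean : ∫ ω, V ω ∂μ = α)
    {W : Ω' → ℝ} (hW : pdf.IsUniform W (Set.Icc 0 (2 * α)) μ') :
    (∀ f : ℝ → ℝ, ConvexOn ℝ Set.univ f → Integrable (fun ω => f (V ω)) μ →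
      ∫ ω, f (W ω) ∂μ' ≤ ∫ ω, f (V ω) ∂μ) ∧
    (MemLp V 2 μ → α ^ 2 / 3 ≤ Var[V; μ]) ∧ Var[W; μ'] = α ^ 2 / 3 := by
  have hb : 0 < 2 * α := by positivity
  have hW_meas : AEMeasurable W μ' := hW.aemeasurable (by simp [hα]) measure_Icc_lt_top.ne
  have hV_meas : AEMeasurable V μ :=
    (Integrable.of_integral_ne_zero (hVmean.trans_ne hα.ne')).aemeasurable
  have := Measure.isProbabilityMeasure_map hV_meas
  have hmean : ∫ x, x ∂(μ.map V) = 2 * α / 2 := by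
    rw [integral_map (f := fun x => x) hV_meas aestronglyMeasurable_id, hVmean]
    ring
  refine ⟨fun f hf hfV => ?_, fun hV2 => ?_, ?_⟩
  · have hf_meas : StronglyMeasurable f :=
      (continuousOn_univ.1 (hf.continuousOn isOpen_univ)).stronglyMeasurable
    rw [← integral_map hW_meas hf_meas.aestronglyMeasurable, hW,
      ← integral_map hV_meas hf_meas.aestronglyMeasurable]
    exact hV.integral_cond_Icc_le hb hmean hf
      ((integrable_map_measure hf_meas.aestronglyMeasurable hV_meas).2 hfV)
  · rw [← variance_id_map hV_meas]
    have hid2 := (memLp_map_measure_iff aestronglyMeasurable_id hV_meas).2 hV2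
    linarith [hV.variance_id_cond_Icc_le hb hmean hid2, variance_id_cond_Icc hb]
  · rw [← variance_id_map hW_meas, hW, variance_id_cond_Icc hb]
    ring

/-- **Proposition.** Among all `α`-random thresholds, the uniform distribution on `[0,2α]`
minimizes every convex expectation (i.e. it is smallest in convex order), and in particular
minimizes the variance, the smallest variance being `α²/3`. -/
theorem uniform_minimizes_convex_order_among_thresholds
    {Ω Ω' : Type*} [MeasurableSpace Ω] [MeasurableSpace Ω']
    (μ : Measure Ω) [IsProbabilityMeasure μ] (μ' : Measure Ω') [IsProbabilityMeasure μ']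
    (α : ℝ) (hα : α ∈ Set.Ioc (0:ℝ) (1/2))
    (V : Ω → ℝ) (hV : IsAlphaRandomThreshold μ α V)
    (W : Ω' → ℝ) (hW : Measurable W)
    (hWunif : μ'.map W =
      (ENNReal.ofReal (2*α))⁻¹ • volume.restrict (Set.Icc (0:ℝ) (2*α))) :
    (∀ f : ℝ → ℝ, ConvexOn ℝ Set.univ f →
      Integrable (fun ω => f (V ω)) μ → Integrable (fun ω => f (W ω)) μ' →
      ∫ ω, f (W ω) ∂μ' ≤ ∫ ω, f (V ω) ∂μ) ∧
    α ^ 2 / 3 ≤ variance V μ ∧ variance W μ' = α ^ 2 / 3 := by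
  have hW' : pdf.IsUniform W (Set.Icc 0 (2 * α)) μ' := by
    rw [pdf.IsUniform, hWunif, ProbabilityTheory.cond, Real.volume_Icc, sub_zero]
  obtain ⟨hconvex, hvarV, hvarW⟩ := uniform_minimizes_convex_order_among_thresholds_general hα.1
    hV.hasAntitoneDensity_map hV.2.2.1 hW'
  exact ⟨fun f hf hfV _ => hconvex f hf hfV, hvarV (hV.memLp 2), hvarW⟩
end

section
/- An increasing function f : [0,1] → [0,∞) is an admissible p-to-p* calibrator if and only if f is left-continuous, f(0) = 0, ∫₀^v f(u) du ≥ v²/2 for all v ∈ (0,1), and ∫₀^1 f(u) du = 1/2. -/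
open MeasureTheory ProbabilityTheory

/-- `f` is a p-to-p* calibrator: an increasing nonnegative function on `[0,1]` such that
`f (min P 1)` is a p*-variable for every p-variable `P` on any probability space. -/
def IsPtoPStarCalibrator (f : ℝ → ℝ) : Prop :=
  MonotoneOn f (Set.Icc 0 1) ∧ (∀ x ∈ Set.Icc (0:ℝ) 1, 0 ≤ f x) ∧
  ∀ (Ω : Type) (_ : MeasurableSpace Ω) (μ : Measure Ω), IsProbabilityMeasure μ →
    ∀ P : Ω → ℝ, Measurable P → IsPVar μ P →
      IsPStarVar μ (fun ω => f (min (P ω) 1))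

open Set Filter Topology

/-!
Let `U` be uniform on `[0,1]`. Since every p-variable stochastically dominates `U`, a monotone
`f ≥ 0` is a calibrator iff `f U` dominates `U` in the increasing concave order. This order is
decided by the test functions `min · v`: they give `v ^ 2 / 2 ≤ ∫₀ᵛ f`, and conversely, for `h`
increasing and concave, `h (f u) - h u` is at least `s (f u) * (f u - u)` with `s` a supergradient
of `h`; as `s ∘ f` is nonnegative and antitone, the layer cake formula writes the integral of this
product as an average of values of the primitive of `f u - u`.

A calibrator can be lowered at a single point to any bound for its values further left, and, when
its integral exceeds `1 / 2`, it can be truncated from above, so an admissible one is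
left-continuous, vanishes at `0` and has integral `1 / 2`. Conversely, a calibrator below an `f` of
integral `1 / 2` has the same integral, hence agrees with `f` almost everywhere, and everywhere on
`(0,1]` by left-continuity of `f`.
-/

lemma exists_ae_eq_Ioc_of_forall_Ioc_subset {α : Type*} [ConditionallyCompleteLinearOrder α]
    [MeasurableSpace α] {μ : Measure α} [NullSingletonClass μ] {s : Set α} {a b : α} (hab : a ≤ b)
    (hsub : s ⊆ Ioc a b) (hs : ∀ x ∈ s, Ioc a x ⊆ s) : ∃ v ∈ Icc a b, s =ᵐ[μ] Ioc a v := by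
  rcases s.eq_empty_or_nonempty with rfl | hne
  · exact ⟨a, left_mem_Icc.2 hab, by simp⟩
  obtain ⟨x, hx⟩ := hne
  have hbdd : BddAbove s := ⟨b, fun y hy => (hsub hy).2⟩
  refine ⟨sSup s, ⟨(hsub hx).1.le.trans (le_csSup hbdd hx), csSup_le ⟨x, hx⟩ fun y hy =>
    (hsub hy).2⟩, ?_⟩
  filter_upwards [μ.ae_ne (sSup s)] with u hu
  refine propext ⟨fun hus => ⟨(hsub hus).1, le_csSup hbdd hus⟩, fun huI => ?_⟩
  obtain ⟨y, hy, huy⟩ := exists_lt_of_lt_csSup ⟨x, hx⟩ (huI.2.lt_of_ne hu)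
  exact hs y hy ⟨huI.1, huy.le⟩

lemma setIntegral_Ioc_indicator_Iio_const {c M : ℝ} (hc : 0 ≤ c) (hcM : c ≤ M) (y : ℝ) :
    ∫ t in Ioc 0 M, (Iio c).indicator (fun _ => y) t = c * y := by
  have hinter : Ioc 0 M ∩ Iio c = Ioo 0 c := by
    ext t
    exact ⟨fun h => ⟨h.1.1, h.2⟩, fun h => ⟨⟨h.1, h.2.le.trans hcM⟩, h.2⟩⟩
  rw [setIntegral_indicator measurableSet_Iio, hinter, setIntegral_const,
    Real.volume_real_Ioo_of_le hc, sub_zero, smul_eq_mul]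

lemma exists_setIntegral_superlevel_indicator_eq {μ : Measure ℝ} [NullSingletonClass μ]
    {φ : ℝ → ℝ} {a b : ℝ} (hab : a ≤ b) (hφ : AntitoneOn φ (Ioc a b)) (g : ℝ → ℝ) (t : ℝ) :
    ∃ v ∈ Icc a b,
      ∫ u in Ioc a b, {u | t < φ u}.indicator g u ∂μ = ∫ u in a..v, g u ∂μ := by
  obtain ⟨v, hv, hsv⟩ : ∃ v ∈ Icc a b, (Ioc a b ∩ {u | t < φ u} : Set ℝ) =ᵐ[μ] Ioc a v :=
    exists_ae_eq_Ioc_of_forall_Ioc_subset hab inter_subset_left fun x hx u hu =>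
      have huI : u ∈ Ioc a b := ⟨hu.1, hu.2.trans hx.1.2⟩
      ⟨huI, lt_of_lt_of_le hx.2 (hφ huI hx.1 hu.2)⟩
  refine ⟨v, hv, ?_⟩
  rw [intervalIntegral.integral_of_le hv.1, ← integral_indicator measurableSet_Ioc,
    ← integral_indicator measurableSet_Ioc, indicator_indicator]
  exact integral_congr_ae (indicator_ae_eq_of_ae_eq_set hsv)

lemma intervalIntegral_antitoneOn_mul_nonneg {μ : Measure ℝ} [NullSingletonClass μ] [SFinite μ]
    {φ g : ℝ → ℝ} {a b : ℝ} (hab : a ≤ b) (hφ : AntitoneOn φ (Icc a b)) (hφb : 0 ≤ φ b)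
    (hg : IntervalIntegrable g μ a b) (hG : ∀ v ∈ Icc a b, 0 ≤ ∫ u in a..v, g u ∂μ) :
    0 ≤ ∫ u in a..b, φ u * g u ∂μ := by
  have hφ' : AntitoneOn φ (Ioc a b) := hφ.mono Ioc_subset_Icc_self
  have hlayer : ∀ u ∈ Ioc a b,
      ∫ t in Ioc 0 (φ a), {u | t < φ u}.indicator g u = φ u * g u := fun u hu =>
    setIntegral_Ioc_indicator_Iio_const
      (hφb.trans (hφ (Ioc_subset_Icc_self hu) (right_mem_Icc.2 hab) hu.2))
      (hφ (left_mem_Icc.2 hab) (Ioc_subset_Icc_self hu) hu.1.le) (g u)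
  have hint : Integrable (Function.uncurry fun u t => {u | t < φ u}.indicator g u)
      ((μ.restrict (Ioc a b)).prod (volume.restrict (Ioc 0 (φ a)))) :=
    (hg.1.comp_fst _).indicator₀ <| nullMeasurableSet_lt measurable_snd.aemeasurable
      (aemeasurable_restrict_of_antitoneOn measurableSet_Ioc hφ').comp_fst
  calc 0 ≤ ∫ t in Ioc 0 (φ a), ∫ u in Ioc a b, {u | t < φ u}.indicator g u ∂μ :=
        integral_nonneg fun t => by
          obtain ⟨v, hv, hgv⟩ := exists_setIntegral_superlevel_indicator_eq (μ := μ) hab hφ' g t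
          exact (hG v hv).trans_eq hgv.symm
    _ = ∫ u in Ioc a b, φ u * g u ∂μ := by
        rw [← integral_integral_swap hint]
        exact setIntegral_congr_fun measurableSet_Ioc hlayer
    _ = ∫ u in a..b, φ u * g u ∂μ := (intervalIntegral.integral_of_le hab).symm

lemma exists_antitone_nonneg_supergradient {h : ℝ → ℝ} (hm : Monotone h)
    (hc : ConcaveOn ℝ univ h) :
    ∃ s : ℝ → ℝ, Antitone s ∧ (∀ x, 0 ≤ s x) ∧ ∀ x y, h y ≤ h x + s x * (y - x) := by
  have hconv : ConvexOn ℝ univ (-h) := hc.neg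
  have hint (x : ℝ) : x ∈ interior (univ : Set ℝ) := by simp
  refine ⟨fun x => -derivWithin (-h) (Ioi x) x, fun x y hxy =>
    neg_le_neg (hconv.monotoneOn_rightDeriv (hint x) (hint y) hxy), fun x => ?_, fun x y => ?_⟩
  · simp only [derivWithin.neg, neg_neg]
    exact (hm.monotoneOn _).derivWithin_nonneg
  · rcases lt_trichotomy x y with hxy | rfl | hyx
    · have hslope := hconv.rightDeriv_le_slope_of_mem_interior (hint x) (mem_univ y) hxy
      rw [slope_def_field, le_div_iff₀ (sub_pos.2 hxy)] at hslope
      simp only [Pi.neg_apply] at hslope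
      linarith
    · simp
    · have hslope := (hconv.slope_le_leftDeriv_of_mem_interior (mem_univ y) (hint x) hyx).trans
        (hconv.leftDeriv_le_rightDeriv_of_mem_interior (hint x))
      rw [slope_def_field, div_le_iff₀ (sub_pos.2 hyx)] at hslope
      simp only [Pi.neg_apply] at hslope
      linarith

lemma intervalIntegrable_antitoneOn_mul {μ : Measure ℝ} {φ g : ℝ → ℝ} {a b : ℝ} (hab : a ≤ b)
    (hφ : AntitoneOn φ (Icc a b)) (hg : IntervalIntegrable g μ a b) :
    IntervalIntegrable (fun u => φ u * g u) μ a b := by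
  rw [intervalIntegrable_iff_integrableOn_Ioc_of_le hab] at hg ⊢
  have hφ_top : MemLp φ ⊤ (μ.restrict (Ioc a b)) :=
    (hφ.memLp_top (isLeast_Icc hab) (isGreatest_Icc hab) measurableSet_Icc).mono_measure
      (Measure.restrict_mono_set μ Ioc_subset_Icc_self)
  exact hg.mul_of_top_right hφ_top

lemma intervalIntegrable_of_monotoneOn_Icc {μ : Measure ℝ} [IsLocallyFiniteMeasure μ] {f : ℝ → ℝ}
    {a b : ℝ} (hab : a ≤ b) (hf : MonotoneOn f (Icc a b)) : IntervalIntegrable f μ a b :=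
  (hf.mono (uIcc_of_le hab).subset).intervalIntegrable

lemma integral_comp_le_integral_comp_of_primitive_le {μ : Measure ℝ} [NullSingletonClass μ]
    [IsLocallyFiniteMeasure μ] {h f k : ℝ → ℝ} {a b : ℝ} (hab : a ≤ b) (hm : Monotone h)
    (hc : ConcaveOn ℝ univ h) (hf : MonotoneOn f (Icc a b)) (hk : IntervalIntegrable k μ a b)
    (hhk : IntervalIntegrable (fun u => h (k u)) μ a b)
    (hkf : ∀ v ∈ Icc a b, ∫ u in a..v, k u ∂μ ≤ ∫ u in a..v, f u ∂μ) :
    ∫ u in a..b, h (k u) ∂μ ≤ ∫ u in a..b, h (f u) ∂μ := by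
  obtain ⟨s, hs, hs0, hsup⟩ := exists_antitone_nonneg_supergradient hm hc
  have hφ : AntitoneOn (fun u => s (f u)) (Icc a b) := hs.comp_monotoneOn hf
  have hfi : IntervalIntegrable f μ a b := intervalIntegrable_of_monotoneOn_Icc hab hf
  have hhf : IntervalIntegrable (fun u => h (f u)) μ a b :=
    intervalIntegrable_of_monotoneOn_Icc hab (hm.comp_monotoneOn hf)
  have hdiff : 0 ≤ ∫ u in a..b, s (f u) * (f u - k u) ∂μ := by
    refine intervalIntegral_antitoneOn_mul_nonneg hab hφ (hs0 _) (hfi.sub hk) fun v hv => ?_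
    have hsub : uIcc a v ⊆ uIcc a b := uIcc_subset_uIcc_left (by rwa [uIcc_of_le hab])
    rw [intervalIntegral.integral_sub (hfi.mono_set hsub) (hk.mono_set hsub)]
    exact sub_nonneg.2 (hkf v hv)
  rw [← sub_nonneg, ← intervalIntegral.integral_sub hhf hhk]
  refine hdiff.trans (intervalIntegral.integral_mono_on hab
    (intervalIntegrable_antitoneOn_mul hab hφ (hfi.sub hk)) (hhf.sub hhk) fun u _ => ?_)
  linarith [hsup (f u) (k u)]

lemma intervalIntegrable_min_id (v a b : ℝ) : IntervalIntegrable (fun u => min u v) volume a b :=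
  (continuous_id.min continuous_const).intervalIntegrable a b

lemma integral_min_id {a b v : ℝ} (hv : v ∈ Icc a b) :
    ∫ u in a..b, min u v = (v ^ 2 - a ^ 2) / 2 + (b - v) * v := by
  have hleft : ∫ u in a..v, min u v = (v ^ 2 - a ^ 2) / 2 := by
    rw [intervalIntegral.integral_congr (g := fun u => u) fun u hu =>
      min_eq_left (uIcc_of_le hv.1 ▸ hu).2, integral_id]
  have hright : ∫ u in v..b, min u v = (b - v) * v := by
    rw [intervalIntegral.integral_congr (g := fun _ => v) fun u hu =>
      min_eq_right (uIcc_of_le hv.2 ▸ hu).1, intervalIntegral.integral_const, smul_eq_mul]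
  rw [← intervalIntegral.integral_add_adjacent_intervals (intervalIntegrable_min_id v a v)
    (intervalIntegrable_min_id v v b), hleft, hright]

lemma integral_min_const_le {μ : Measure ℝ} [IsLocallyFiniteMeasure μ] {f : ℝ → ℝ} {a b v : ℝ}
    (hf : IntervalIntegrable f μ a b) (hv : v ∈ Icc a b) (c : ℝ) :
    ∫ u in a..b, min (f u) c ∂μ ≤ (∫ u in a..v, f u ∂μ) + ∫ _ in v..b, c ∂μ := by
  have hc (x y : ℝ) : IntervalIntegrable (fun _ => c) μ x y := intervalIntegrable_const
  have hv' : v ∈ uIcc a b := Icc_subset_uIcc hv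
  have hfv : IntervalIntegrable f μ a v := hf.mono_set (uIcc_subset_uIcc_left hv')
  have hmin : IntervalIntegrable (fun u => min (f u) c) μ a b :=
    ⟨hf.1.inf (hc a b).1, hf.2.inf (hc a b).2⟩
  have hleft := hmin.mono_set (uIcc_subset_uIcc_left hv')
  have hright := hmin.mono_set (uIcc_subset_uIcc_right hv')
  rw [← intervalIntegral.integral_add_adjacent_intervals hleft hright]
  exact add_le_add
    (intervalIntegral.integral_mono_on hv.1 hleft hfv fun u _ => min_le_left _ _)
    (intervalIntegral.integral_mono_on hv.2 hright (hc v b) fun u _ => min_le_right _ _)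

lemma ae_eq_of_le_of_integral_le {μ : Measure ℝ} {f g : ℝ → ℝ} {a b : ℝ} (hab : a ≤ b)
    (hf : IntervalIntegrable f μ a b) (hg : IntervalIntegrable g μ a b)
    (hgf : ∀ u ∈ Icc a b, g u ≤ f u) (hfg : ∫ u in a..b, f u ∂μ ≤ ∫ u in a..b, g u ∂μ) :
    g =ᵐ[μ.restrict (Ioc a b)] f := by
  have hle : g ≤ᵐ[μ.restrict (Ioc a b)] f :=
    ae_restrict_of_forall_mem measurableSet_Ioc fun u hu => hgf u (Ioc_subset_Icc_self hu)
  refine (integral_eq_iff_of_ae_le hg.1 hf.1 hle).1 ?_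
  rw [← intervalIntegral.integral_of_le hab, ← intervalIntegral.integral_of_le hab]
  exact le_antisymm (intervalIntegral.integral_mono_on hab hg hf hgf) hfg

lemma le_of_ae_eq_of_continuousWithinAt_Iic {μ : Measure ℝ} [μ.IsOpenPosMeasure] {f g : ℝ → ℝ}
    {a b x : ℝ} (hg : MonotoneOn g (Icc a b)) (hgf : g =ᵐ[μ.restrict (Ioc a b)] f)
    (hx : x ∈ Ioc a b) (hcont : ContinuousWithinAt f (Iic x) x) : f x ≤ g x := by
  refine le_of_tendsto_of_frequently (hcont.mono Iio_subset_Iic_self)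
    ((nhdsLT_basis_of_exists_lt ⟨a, hx.1⟩).frequently_iff.2 fun w hwx => ?_)
  have hdense : Dense {u | u ∈ Ioc a b → g u = f u} :=
    Measure.dense_of_ae ((ae_restrict_iff' measurableSet_Ioc).1 hgf)
  obtain ⟨u, hgfu, hu⟩ := hdense.exists_between (max_lt hwx hx.1)
  have huI : u ∈ Ioc a b := ⟨(le_max_right _ _).trans_lt hu.1, hu.2.le.trans hx.2⟩
  refine ⟨u, ⟨(le_max_left _ _).trans_lt hu.1, hu.2⟩, ?_⟩
  rw [← hgfu huI]
  exact hg (Ioc_subset_Icc_self huI) (Ioc_subset_Icc_self hx) hu.2.le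

lemma monotoneOn_update {α β : Type*} [PartialOrder α] [DecidableEq α] [Preorder β] {f : α → β}
    {s : Set α} {x : α} {y : β} (hf : MonotoneOn f s) (hyx : y ≤ f x)
    (hleft : ∀ u ∈ s, u < x → f u ≤ y) : MonotoneOn (Function.update f x y) s := by
  intro u hu w hw huw
  rcases eq_or_ne u x with rfl | hux
  · rcases eq_or_ne w u with rfl | hwu
    · rfl
    · rw [Function.update_self, Function.update_of_ne hwu]
      exact hyx.trans (hf hu hw huw)
  · rw [Function.update_of_ne hux]
    rcases eq_or_ne w x with rfl | hwx
    · rw [Function.update_self]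
      exact hleft u hu (huw.lt_of_ne hux)
    · rw [Function.update_of_ne hwx]
      exact hf hu hw huw

lemma lintegral_ofReal_le_of_measure_lt_le_measure_le {α β : Type*} [MeasurableSpace α]
    [MeasurableSpace β] {μ : Measure α} {ν : Measure β} {X : α → ℝ} {Y : β → ℝ}
    (hX : AEMeasurable X μ) (hY : AEMeasurable Y ν)
    (hXY : ∀ t > 0, μ {a | t < X a} ≤ ν {b | t ≤ Y b}) :
    ∫⁻ a, ENNReal.ofReal (X a) ∂μ ≤ ∫⁻ b, ENNReal.ofReal (Y b) ∂ν := by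
  have max_zero (x : ℝ) : ENNReal.ofReal x = ENNReal.ofReal (max x 0) := by
    rw [ENNReal.ofReal_max, ENNReal.ofReal_zero, max_eq_left zero_le]
  simp only [max_zero (X _), max_zero (Y _)]
  rw [lintegral_eq_lintegral_meas_lt μ (f := fun a => max (X a) 0)
      (.of_forall fun a => le_max_right _ _) (hX.max aemeasurable_const),
    lintegral_eq_lintegral_meas_le ν (f := fun b => max (Y b) 0)
      (.of_forall fun b => le_max_right _ _) (hY.max aemeasurable_const)]
  refine setLIntegral_mono' measurableSet_Ioi fun t (ht : 0 < t) => ?_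
  simpa only [lt_max_iff, le_max_iff, ht.not_gt, ht.not_ge, or_false] using hXY t ht

lemma integral_le_integral_of_measure_le_le {α β : Type*} [MeasurableSpace α] [MeasurableSpace β]
    {μ : Measure α} {ν : Measure β} [IsProbabilityMeasure μ] [IsProbabilityMeasure ν]
    {X : α → ℝ} {Y : β → ℝ} (hX : Integrable X μ) (hY : Integrable Y ν)
    (hXY : ∀ t, ν {b | Y b ≤ t} ≤ μ {a | X a ≤ t}) : ∫ a, X a ∂μ ≤ ∫ b, Y b ∂ν := by
  have hpos : ∫⁻ a, ENNReal.ofReal (X a) ∂μ ≤ ∫⁻ b, ENNReal.ofReal (Y b) ∂ν := by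
    refine lintegral_ofReal_le_of_measure_lt_le_measure_le hX.aemeasurable hY.aemeasurable
      fun t _ => ?_
    calc μ {a | t < X a} = 1 - μ {a | X a ≤ t} := by
          rw [← prob_compl_eq_one_sub₀ (nullMeasurableSet_le hX.aemeasurable aemeasurable_const)]
          simp only [compl_ofPred, not_le]
      _ ≤ 1 - ν {b | Y b ≤ t} := tsub_le_tsub_left (hXY t) 1
      _ = ν {b | t < Y b} := by
          rw [← prob_compl_eq_one_sub₀ (nullMeasurableSet_le hY.aemeasurable aemeasurable_const)]
          simp only [compl_ofPred, not_le]
      _ ≤ ν {b | t ≤ Y b} := measure_mono fun b (hb : t < Y b) => hb.le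
  have hneg : ∫⁻ b, ENNReal.ofReal (-Y b) ∂ν ≤ ∫⁻ a, ENNReal.ofReal (-X a) ∂μ := by
    refine lintegral_ofReal_le_of_measure_lt_le_measure_le hY.aemeasurable.neg hX.aemeasurable.neg
      fun t _ => ?_
    calc ν {b | t < -Y b} ≤ ν {b | Y b ≤ -t} :=
          measure_mono fun b (hb : t < -Y b) => (lt_neg.1 hb).le
      _ ≤ μ {a | X a ≤ -t} := hXY (-t)
      _ = μ {a | t ≤ -X a} := by simp only [le_neg]
  rw [integral_eq_lintegral_pos_part_sub_lintegral_neg_part hX,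
    integral_eq_lintegral_pos_part_sub_lintegral_neg_part hY]
  exact sub_le_sub (ENNReal.toReal_mono hY.lintegral_lt_top.ne hpos)
    (ENNReal.toReal_mono hX.neg.lintegral_lt_top.ne hneg)

instance isProbabilityMeasure_restrict_Ioc_zero_one :
    IsProbabilityMeasure (volume.restrict (Ioc (0 : ℝ) 1)) := ⟨by simp⟩

lemma isPVar_id_restrict_Ioc : IsPVar (volume.restrict (Ioc (0 : ℝ) 1)) id := fun α hα => by
  change volume.restrict (Ioc 0 1) (Iic α) ≤ ENNReal.ofReal α
  rw [Measure.restrict_apply measurableSet_Iic, inter_comm, Ioc_inter_Iic, min_eq_right hα.2.le,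
    Real.volume_Ioc, sub_zero]

section PVar

variable {Ω : Type*} [MeasurableSpace Ω] {μ : Measure Ω} [IsProbabilityMeasure μ] {P : Ω → ℝ}
  {ψ : ℝ → ℝ}

lemma IsPVar.measure_comp_min_one_le_le (hP : IsPVar μ P) (hψ : MonotoneOn ψ (Ioc 0 1)) (t : ℝ) :
    μ {ω | ψ (min (P ω) 1) ≤ t} ≤ volume.restrict (Ioc 0 1) {u | ψ u ≤ t} := by
  by_contra! hlt
  obtain ⟨r, -, hvol_lt, hlt_meas⟩ := ENNReal.lt_iff_exists_real_btwn.1 hlt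
  have hr0 : 0 < r := ENNReal.ofReal_pos.1 hvol_lt.pos
  have hr1 : r < 1 := ENNReal.ofReal_lt_one.1 (hlt_meas.trans_le prob_le_one)
  by_cases hrt : ψ r ≤ t
  · refine hvol_lt.not_ge ?_
    calc ENNReal.ofReal r = volume.restrict (Ioc 0 1) (Ioc 0 r) := by
          rw [Measure.restrict_apply measurableSet_Ioc,
            inter_eq_left.2 (Ioc_subset_Ioc_right hr1.le), Real.volume_Ioc, sub_zero]
      _ ≤ volume.restrict (Ioc 0 1) {u | ψ u ≤ t} := measure_mono fun u hu =>
          (hψ ⟨hu.1, hu.2.trans hr1.le⟩ ⟨hr0, hr1.le⟩ hu.2).trans hrt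
  · refine hlt_meas.not_ge ((measure_mono fun ω hω => ?_).trans (hP r ⟨hr0, hr1⟩))
    by_contra hrω
    have hrP : r < P ω := not_le.1 hrω
    have hrmin : r ≤ min (P ω) 1 := le_min hrP.le hr1.le
    exact hrt ((hψ ⟨hr0, hr1.le⟩ ⟨hr0.trans_le hrmin, min_le_right _ _⟩ hrmin).trans hω)

lemma IsPVar.integral_le_integral_comp_min_one (hP : IsPVar μ P) (hψ : MonotoneOn ψ (Ioc 0 1))
    (hψi : IntervalIntegrable ψ volume 0 1) (hψP : Integrable (fun ω => ψ (min (P ω) 1)) μ) :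
    ∫ u in (0 : ℝ)..1, ψ u ≤ ∫ ω, ψ (min (P ω) 1) ∂μ := by
  rw [intervalIntegral.integral_of_le zero_le_one]
  exact integral_le_integral_of_measure_le_le hψi.1 hψP (hP.measure_comp_min_one_le_le hψ)

end PVar

section Calibrator

variable {f : ℝ → ℝ}

lemma IsPtoPStarCalibrator.integral_min_le (hf : IsPtoPStarCalibrator f) (v : ℝ) :
    ∫ u in (0 : ℝ)..1, min u v ≤ ∫ u in (0 : ℝ)..1, min (f u) v := by
  have hmin : IntervalIntegrable (fun u => min (f u) v) volume 0 1 :=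
    intervalIntegrable_of_monotoneOn_Icc zero_le_one (hf.1.min monotoneOn_const)
  have hclamp : (fun u => min (f u) v) =ᵐ[volume.restrict (Ioc 0 1)]
      fun u => min (f (min u 1)) v :=
    ae_restrict_of_forall_mem measurableSet_Ioc fun u hu =>
      congrArg (fun w => min (f w) v) (min_eq_left hu.2).symm
  refine (hf.2.2 ℝ _ _ inferInstance id measurable_id isPVar_id_restrict_Ioc (fun u => min u v)
    (monotone_id.min monotone_const) ((concaveOn_id convex_univ).inf
      (concaveOn_const v convex_univ)) (intervalIntegrable_min_id v 0 1)
    (hmin.1.congr hclamp)).trans_eq ?_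
  rw [intervalIntegral.integral_of_le zero_le_one]
  exact integral_congr_ae hclamp.symm

lemma sq_div_two_le_integral_of_integral_min_le {v : ℝ}
    (hf : IntervalIntegrable f volume 0 1) (hv : v ∈ Icc (0 : ℝ) 1)
    (hmin : ∫ u in (0 : ℝ)..1, min u v ≤ ∫ u in (0 : ℝ)..1, min (f u) v) :
    v ^ 2 / 2 ≤ ∫ u in (0 : ℝ)..v, f u := by
  have hsplit := integral_min_const_le hf hv v
  rw [intervalIntegral.integral_const, smul_eq_mul] at hsplit
  rw [integral_min_id hv] at hmin
  linarith

lemma isPtoPStarCalibrator_of_sq_div_two_le_integral (hmono : MonotoneOn f (Icc 0 1))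
    (hpos : ∀ x ∈ Icc (0 : ℝ) 1, 0 ≤ f x)
    (hF : ∀ v ∈ Icc (0 : ℝ) 1, v ^ 2 / 2 ≤ ∫ u in (0 : ℝ)..v, f u) :
    IsPtoPStarCalibrator f := by
  refine ⟨hmono, hpos, fun Ω _ μ _ P _ hP h hm hc hhi hhP => ?_⟩
  have hψ : MonotoneOn (fun u => h (f u)) (Icc 0 1) := hm.comp_monotoneOn hmono
  calc ∫ u in (0 : ℝ)..1, h u ≤ ∫ u in (0 : ℝ)..1, h (f u) :=
        integral_comp_le_integral_comp_of_primitive_le zero_le_one hm hc hmono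
          intervalIntegral.intervalIntegrable_id hhi fun v hv => by
            simpa [integral_id] using hF v hv
    _ ≤ ∫ ω, h (f (min (P ω) 1)) ∂μ :=
        hP.integral_le_integral_comp_min_one (hψ.mono Ioc_subset_Icc_self)
          (intervalIntegrable_of_monotoneOn_Icc zero_le_one hψ) hhP

lemma isPtoPStarCalibrator_of_integral_min_le (hmono : MonotoneOn f (Icc 0 1))
    (hpos : ∀ x ∈ Icc (0 : ℝ) 1, 0 ≤ f x)
    (hmin : ∀ v : ℝ, ∫ u in (0 : ℝ)..1, min u v ≤ ∫ u in (0 : ℝ)..1, min (f u) v) :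
    IsPtoPStarCalibrator f :=
  isPtoPStarCalibrator_of_sq_div_two_le_integral hmono hpos fun v hv =>
    sq_div_two_le_integral_of_integral_min_le
      (intervalIntegrable_of_monotoneOn_Icc zero_le_one hmono) hv (hmin v)

lemma IsPtoPStarCalibrator.sq_div_two_le_integral (hf : IsPtoPStarCalibrator f) {v : ℝ}
    (hv : v ∈ Icc (0 : ℝ) 1) : v ^ 2 / 2 ≤ ∫ u in (0 : ℝ)..v, f u :=
  sq_div_two_le_integral_of_integral_min_le
    (intervalIntegrable_of_monotoneOn_Icc zero_le_one hf.1) hv (hf.integral_min_le v)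

lemma IsPtoPStarCalibrator.min_const (hf : IsPtoPStarCalibrator f) {c : ℝ}
    (hc : 1 / 2 ≤ ∫ u in (0 : ℝ)..1, min (f u) c) :
    IsPtoPStarCalibrator fun u => min (f u) c := by
  have hmono : MonotoneOn (fun u => min (f u) c) (Icc 0 1) := hf.1.min monotoneOn_const
  have hint : IntervalIntegrable (fun u => min (f u) c) volume 0 1 :=
    intervalIntegrable_of_monotoneOn_Icc zero_le_one hmono
  have hc0 : 0 ≤ c := by
    have hle := intervalIntegral.integral_mono_on zero_le_one hint
      (intervalIntegrable_const (c := c)) fun u _ => min_le_right (f u) c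
    rw [intervalIntegral.integral_const, sub_zero, one_smul] at hle
    linarith
  refine isPtoPStarCalibrator_of_integral_min_le hmono (fun x hx => le_min (hf.2.1 x hx) hc0)
    fun v => ?_
  simp only [min_assoc]
  rcases le_total v c with hvc | hcv
  · rw [min_eq_right hvc]
    exact hf.integral_min_le v
  · rw [min_eq_left hcv]
    calc ∫ u in (0 : ℝ)..1, min u v ≤ ∫ u in (0 : ℝ)..1, u :=
          intervalIntegral.integral_mono_on zero_le_one (intervalIntegrable_min_id v 0 1)
            intervalIntegral.intervalIntegrable_id fun u _ => min_le_left u v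
      _ = 1 / 2 := by norm_num [integral_id]
      _ ≤ ∫ u in (0 : ℝ)..1, min (f u) c := hc

lemma IsPtoPStarCalibrator.update (hf : IsPtoPStarCalibrator f) {x y : ℝ} (hy0 : 0 ≤ y)
    (hyx : y ≤ f x) (hleft : ∀ u ∈ Icc (0 : ℝ) 1, u < x → f u ≤ y) :
    IsPtoPStarCalibrator (Function.update f x y) := by
  have hupd (u : ℝ) (hu : u ≠ x) : Function.update f x y u = f u := Function.update_of_ne hu y f
  refine isPtoPStarCalibrator_of_sq_div_two_le_integral (monotoneOn_update hf.1 hyx hleft)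
    (fun u hu => ?_) fun v hv => ?_
  · rcases eq_or_ne u x with rfl | hux
    · rwa [Function.update_self]
    · exact (hf.2.1 u hu).trans_eq (hupd u hux).symm
  · have hae : ∀ᵐ u : ℝ, u ∈ uIoc 0 v → Function.update f x y u = f u := by
      filter_upwards [volume.ae_ne x] with u hu _ using hupd u hu
    exact (hf.sq_div_two_le_integral hv).trans_eq (intervalIntegral.integral_congr_ae hae).symm

end Calibrator

/-- An admissible p-to-p* calibrator: no other p-to-p* calibrator lies below it. Calibrators are
compared on `[0,1]` only, their values outside this interval being irrelevant. -/
def IsAdmissiblePtoPStarCalibrator (f : ℝ → ℝ) : Prop :=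
  IsPtoPStarCalibrator f ∧
    ¬∃ g : ℝ → ℝ, IsPtoPStarCalibrator g ∧ (∀ x ∈ Icc (0 : ℝ) 1, g x ≤ f x) ∧
      ∃ x ∈ Icc (0 : ℝ) 1, g x ≠ f x

namespace IsAdmissiblePtoPStarCalibrator

variable {f : ℝ → ℝ} {x : ℝ}

lemma eq_of_le {g : ℝ → ℝ} (hf : IsAdmissiblePtoPStarCalibrator f) (hg : IsPtoPStarCalibrator g)
    (hgf : ∀ x ∈ Icc (0 : ℝ) 1, g x ≤ f x) (hx : x ∈ Icc (0 : ℝ) 1) : g x = f x := by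
  by_contra hne
  exact hf.2 ⟨g, hg, hgf, x, hx, hne⟩

lemma le_of_forall_lt_le (hf : IsAdmissiblePtoPStarCalibrator f) (hx : x ∈ Icc (0 : ℝ) 1) {y : ℝ}
    (hy : 0 ≤ y) (hleft : ∀ u ∈ Icc (0 : ℝ) 1, u < x → f u ≤ y) : f x ≤ y := by
  by_contra! hyx
  have hle : ∀ u ∈ Icc (0 : ℝ) 1, Function.update f x y u ≤ f u := fun u _ =>
    update_le_self_iff.2 hyx.le u
  have heq := hf.eq_of_le (hf.1.update hy hyx.le hleft) hle hx
  rw [Function.update_self] at heq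
  exact hyx.ne heq

lemma map_zero (hf : IsAdmissiblePtoPStarCalibrator f) : f 0 = 0 := by
  have h0 : (0 : ℝ) ∈ Icc (0 : ℝ) 1 := unitInterval.zero_mem
  exact le_antisymm (hf.le_of_forall_lt_le h0 le_rfl fun u hu hu0 => absurd hu.1 hu0.not_ge)
    (hf.1.2.1 0 h0)

lemma continuousWithinAt_Iic (hf : IsAdmissiblePtoPStarCalibrator f) (hx : x ∈ Ioc (0 : ℝ) 1) :
    ContinuousWithinAt f (Iic x) x := by
  have hxI : x ∈ Icc (0 : ℝ) 1 := Ioc_subset_Icc_self hx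
  have hnear : ∀ᶠ u in 𝓝[≤] x, u ∈ Ioc 0 x := Ioc_mem_nhdsLE hx.1
  refine tendsto_order.2 ⟨fun y hyx => ?_, fun y hxy => ?_⟩
  · obtain ⟨w, hw, hwx, hyw⟩ : ∃ w ∈ Icc (0 : ℝ) 1, w < x ∧ y < f w := by
      by_contra! hleft
      have hy0 : 0 ≤ y := (hf.1.2.1 0 unitInterval.zero_mem).trans
        (hleft 0 unitInterval.zero_mem hx.1)
      exact hyx.not_ge (hf.le_of_forall_lt_le hxI hy0 hleft)
    filter_upwards [Ioc_mem_nhdsLE hwx] with u hu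
    exact hyw.trans_le (hf.1.1 hw ⟨hw.1.trans hu.1.le, hu.2.trans hx.2⟩ hu.1.le)
  · filter_upwards [hnear] with u hu
    exact (hf.1.1 ⟨hu.1.le, hu.2.trans hx.2⟩ hxI hu.2).trans_lt hxy

lemma integral_eq_half (hf : IsAdmissiblePtoPStarCalibrator f) :
    ∫ u in (0 : ℝ)..1, f u = 1 / 2 := by
  have h1 : (1 : ℝ) ∈ Icc (0 : ℝ) 1 := unitInterval.one_mem
  have hint : IntervalIntegrable f volume 0 1 :=
    intervalIntegrable_of_monotoneOn_Icc zero_le_one hf.1.1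
  have hge : 1 / 2 ≤ ∫ u in (0 : ℝ)..1, f u := by
    simpa only [one_pow] using hf.1.sq_div_two_le_integral h1
  -- Capping `f` at `f 1 - δ` lowers it by at most `δ`, so the integral stays at least `1 / 2`.
  set δ : ℝ := (∫ u in (0 : ℝ)..1, f u) - 1 / 2 with hδ
  have htrunc : 1 / 2 ≤ ∫ u in (0 : ℝ)..1, min (f u) (f 1 - δ) :=
    calc 1 / 2 = ∫ u in (0 : ℝ)..1, (f u - δ) := by
          rw [intervalIntegral.integral_sub hint intervalIntegrable_const,
            intervalIntegral.integral_const, sub_zero, one_smul, hδ, sub_sub_cancel]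
      _ ≤ ∫ u in (0 : ℝ)..1, min (f u) (f 1 - δ) :=
          intervalIntegral.integral_mono_on zero_le_one (hint.sub intervalIntegrable_const)
            (intervalIntegrable_of_monotoneOn_Icc zero_le_one (hf.1.1.min monotoneOn_const))
            fun u hu =>
              le_min (sub_le_self _ (sub_nonneg.2 hge)) (sub_le_sub_right (hf.1.1 hu h1 hu.2) δ)
  have hmin : min (f 1) (f 1 - δ) = f 1 :=
    hf.eq_of_le (hf.1.min_const htrunc) (fun u _ => min_le_left _ _) h1
  linarith [min_eq_left_iff.1 hmin]

end IsAdmissiblePtoPStarCalibrator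

lemma isAdmissiblePtoPStarCalibrator_of_integral_eq_half {f : ℝ → ℝ} (hf : IsPtoPStarCalibrator f)
    (hcont : ∀ x ∈ Ioc (0 : ℝ) 1, ContinuousWithinAt f (Iic x) x) (hzero : f 0 = 0)
    (hF1 : ∫ u in (0 : ℝ)..1, f u = 1 / 2) : IsAdmissiblePtoPStarCalibrator f := by
  refine ⟨hf, ?_⟩
  rintro ⟨g, hg, hgf, x, hx, hne⟩
  have hfg : ∫ u in (0 : ℝ)..1, f u ≤ ∫ u in (0 : ℝ)..1, g u := by
    simpa only [hF1, one_pow] using hg.sq_div_two_le_integral unitInterval.one_mem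
  have hae : g =ᵐ[volume.restrict (Ioc 0 1)] f := ae_eq_of_le_of_integral_le zero_le_one
    (intervalIntegrable_of_monotoneOn_Icc zero_le_one hf.1)
    (intervalIntegrable_of_monotoneOn_Icc zero_le_one hg.1) hgf hfg
  refine hne (le_antisymm (hgf x hx) ?_)
  rcases hx.1.eq_or_lt with rfl | hx0
  · exact hzero.trans_le (hg.2.1 0 hx)
  · exact le_of_ae_eq_of_continuousWithinAt_Iic hg.1 hae ⟨hx0, hx.2⟩ (hcont x ⟨hx0, hx.2⟩)

/-- **Theorem.** An increasing function `f : [0,1] → [0,∞)` is an admissible p-to-p*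
calibrator if and only if `f` is left-continuous, `f 0 = 0`, `∫₀^v f ≥ v²/2` for all
`v ∈ (0,1)`, and `∫₀^1 f = 1/2`. -/
theorem admissible_p_to_pStar_calibrator_iff
    (f : ℝ → ℝ) (hmono : MonotoneOn f (Set.Icc 0 1))
    (hpos : ∀ x ∈ Set.Icc (0:ℝ) 1, 0 ≤ f x) :
    (IsPtoPStarCalibrator f ∧
      ¬∃ g : ℝ → ℝ, IsPtoPStarCalibrator g ∧ (∀ x ∈ Set.Icc (0:ℝ) 1, g x ≤ f x) ∧
        ∃ x ∈ Set.Icc (0:ℝ) 1, g x ≠ f x) ↔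
    ((∀ x ∈ Set.Ioc (0:ℝ) 1, ContinuousWithinAt f (Set.Iic x) x) ∧ f 0 = 0 ∧
      (∀ v ∈ Set.Ioo (0:ℝ) 1, v ^ 2 / 2 ≤ ∫ u in (0:ℝ)..v, f u) ∧
      ∫ u in (0:ℝ)..1, f u = 1/2) := by
  change IsAdmissiblePtoPStarCalibrator f ↔ _
  constructor
  · intro hf
    exact ⟨fun x hx => hf.continuousWithinAt_Iic hx, hf.map_zero,
      fun v hv => hf.1.sq_div_two_le_integral (Ioo_subset_Icc_self hv), hf.integral_eq_half⟩
  · rintro ⟨hcont, hzero, hF, hF1⟩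
    have hF' : ∀ v ∈ Icc (0 : ℝ) 1, v ^ 2 / 2 ≤ ∫ u in (0 : ℝ)..v, f u := fun v hv => by
      rcases hv.1.eq_or_lt with rfl | hv0
      · simp
      rcases hv.2.eq_or_lt with rfl | hv1
      · rw [hF1, one_pow]
      · exact hF v ⟨hv0, hv1⟩
    exact isAdmissiblePtoPStarCalibrator_of_integral_eq_half
      (isPtoPStarCalibrator_of_sq_div_two_le_integral hmono hpos hF') hcont hzero hF1
end

section
/- For every e-variable E, the random variable P := min(1/(2E), 1) is a p*-variable (with the convention 1/(2E) = ∞ when E = 0). -/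
open MeasureTheory ProbabilityTheory ENNReal

/-!
Let `f` be increasing and concave, with mean `F` over `[0, 1]`, and let `p > 0`. By concavity the
mean of `f` over `[0, 2p]` is at most its value at the midpoint `p`, and by monotonicity the signed
integral of `f` from `2p` to `1` is at most `(1 - 2p) f(1)`, even when `2p > 1`. Hence
`F ≤ 2p f(p) + (1 - 2p) f(1)`. For `p = 1/(2e)` this reads `f(1) - e (f(1) - F) ≤ f(p)`, a bound
affine in `e`, into which `E[E] ≤ 1` and `F ≤ f(1)` can be inserted after taking expectations.
-/

section IncreasingConcave

variable {f : ℝ → ℝ} {a b c p : ℝ}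

lemma integral_le_sub_mul_apply_midpoint_of_concaveOn (hab : a ≤ b)
    (hc : ConcaveOn ℝ (Set.Ioo a b) f) (hf : IntervalIntegrable f volume a b) :
    ∫ u in a..b, f u ≤ (b - a) * f ((a + b) / 2) := by
  have hf_reflect : IntervalIntegrable (fun u => f (a + b - u)) volume a b := by
    simpa using (hf.comp_sub_left (a + b)).symm
  have h_reflect : ∫ u in a..b, f (a + b - u) = ∫ u in a..b, f u := by simp
  have h_midpoint : ∀ u ∈ Set.Ioo a b, f u + f (a + b - u) ≤ 2 * f ((a + b) / 2) := by
    rintro u ⟨hau, hub⟩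
    have h := hc.2 ⟨hau, hub⟩ (y := a + b - u) ⟨by linarith, by linarith⟩
      (by norm_num : (0 : ℝ) ≤ 1 / 2) (by norm_num : (0 : ℝ) ≤ 1 / 2) (by norm_num)
    rw [← smul_add, ← smul_add, add_sub_cancel, smul_eq_mul, smul_eq_mul,
      one_div_mul_eq_div, one_div_mul_eq_div] at h
    linarith
  have h_mono := intervalIntegral.integral_mono_on_of_le_Ioo hab (hf.add hf_reflect)
    intervalIntegrable_const h_midpoint
  rw [intervalIntegral.integral_add hf hf_reflect, h_reflect, intervalIntegral.integral_const,
    smul_eq_mul] at h_mono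
  linarith

lemma integral_le_sub_mul_apply_right_of_monotoneOn (hm : MonotoneOn f (Set.Ioi a))
    (hac : a ≤ c) (hab : a < b) (hf : IntervalIntegrable f volume c b) :
    ∫ u in c..b, f u ≤ (b - c) * f b := by
  rw [← smul_eq_mul, ← intervalIntegral.integral_const]
  rcases le_total c b with hcb | hbc
  · exact intervalIntegral.integral_mono_on_of_le_Ioo hcb hf intervalIntegrable_const
      fun u hu => hm (hac.trans_lt hu.1) hab hu.2.le
  · rw [intervalIntegral.integral_symm b c, intervalIntegral.integral_symm b c, neg_le_neg_iff]
    exact intervalIntegral.integral_mono_on_of_le_Ioo hbc intervalIntegrable_const hf.symm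
      fun u hu => hm hab (hab.trans hu.1) hu.1.le

lemma integral_le_mul_apply_add_mul_apply_right_of_monotoneOn_of_concaveOn
    (hm : MonotoneOn f (Set.Ioi a)) (hc : ConcaveOn ℝ (Set.Ioi a) f)
    (hab : a < b) (hap : a < p) (hf : IntervalIntegrable f volume a b) :
    ∫ u in a..b, f u ≤ 2 * (p - a) * f p + (b - a - 2 * (p - a)) * f b := by
  set c := 2 * p - a
  have hac : a < c := by grind
  have hf_cb : IntervalIntegrable f volume c b :=
    (hm.mono fun u hu => (lt_min hac hab).trans_le hu.1).intervalIntegrable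
  have hf_ac : IntervalIntegrable f volume a c := hf.trans hf_cb.symm
  have h_left := integral_le_sub_mul_apply_midpoint_of_concaveOn hac.le
    (hc.subset Set.Ioo_subset_Ioi_self (convex_Ioo a c)) hf_ac
  have h_right := integral_le_sub_mul_apply_right_of_monotoneOn hm hac.le hab hf_cb
  calc ∫ u in a..b, f u
      = (∫ u in a..c, f u) + ∫ u in c..b, f u :=
        (intervalIntegral.integral_add_adjacent_intervals hf_ac hf_cb).symm
    _ ≤ (c - a) * f ((a + c) / 2) + (b - c) * f b := add_le_add h_left h_right
    _ = 2 * (p - a) * f p + (b - a - 2 * (p - a)) * f b := by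
        rw [show (a + c) / 2 = p by grind]
        grind

lemma integral_zero_one_le_apply_one (hm : MonotoneOn f (Set.Ioi 0))
    (hf : IntervalIntegrable f volume 0 1) :
    ∫ u in (0:ℝ)..1, f u ≤ f 1 := by
  simpa using integral_le_sub_mul_apply_right_of_monotoneOn hm le_rfl one_pos hf

lemma sub_mul_le_apply_min_inv_two_mul (hm : MonotoneOn f (Set.Ioi 0))
    (hc : ConcaveOn ℝ (Set.Ioi 0) f) (hf : IntervalIntegrable f volume 0 1)
    {e : ℝ≥0∞} (he : e ≠ ∞) :
    f 1 - e.toReal * (f 1 - ∫ u in (0:ℝ)..1, f u) ≤ f (min (2 * e)⁻¹ 1).toReal := by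
  rcases le_total 1 (2 * e)⁻¹ with h | h
  · rw [min_eq_right h, ENNReal.toReal_one, sub_le_self_iff]
    exact mul_nonneg ENNReal.toReal_nonneg
      (sub_nonneg.2 (integral_zero_one_le_apply_one hm hf))
  · have he0 : e ≠ 0 := by
      rintro rfl
      simp at h
    have he_pos : 0 < e.toReal := ENNReal.toReal_pos he0 he
    have h_toReal : (min (2 * e)⁻¹ 1).toReal = (2 * e.toReal)⁻¹ := by
      rw [min_eq_left h, ENNReal.toReal_inv, ENNReal.toReal_mul, ENNReal.toReal_ofNat]
    have h_bound := integral_le_mul_apply_add_mul_apply_right_of_monotoneOn_of_concaveOn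
      (p := (2 * e.toReal)⁻¹) hm hc one_pos (by positivity) hf
    rw [sub_zero, sub_zero] at h_bound
    rw [h_toReal]
    calc f 1 - e.toReal * (f 1 - ∫ u in (0:ℝ)..1, f u)
        ≤ f 1 - e.toReal * (f 1 - (2 * (2 * e.toReal)⁻¹ * f (2 * e.toReal)⁻¹
            + (1 - 2 * (2 * e.toReal)⁻¹) * f 1)) := by gcongr
      _ = f (2 * e.toReal)⁻¹ := by
          field_simp
          ring

end IncreasingConcave

theorem min_inv_two_e_is_pStarVar_general
    {Ω : Type*} [MeasurableSpace Ω] {μ : Measure Ω} [IsProbabilityMeasure μ]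
    {E : Ω → ℝ≥0∞} (hE : AEMeasurable E μ) (hE1 : ∫⁻ ω, E ω ∂μ ≤ 1)
    {f : ℝ → ℝ} (hm : MonotoneOn f (Set.Ioi 0)) (hc : ConcaveOn ℝ (Set.Ioi 0) f)
    (hf : IntervalIntegrable f volume 0 1)
    (hfP : Integrable (fun ω => f (min (2 * E ω)⁻¹ 1).toReal) μ) :
    ∫ u in (0:ℝ)..1, f u ≤ ∫ ω, f (min (2 * E ω)⁻¹ 1).toReal ∂μ := by
  set F := ∫ u in (0:ℝ)..1, f u
  have hE_ne : ∫⁻ ω, E ω ∂μ ≠ ∞ := ne_top_of_le_ne_top one_ne_top hE1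
  have hE_lt : ∀ᵐ ω ∂μ, E ω < ∞ := ae_lt_top' hE hE_ne
  have hE_int : Integrable (fun ω => (E ω).toReal) μ :=
    integrable_toReal_of_lintegral_ne_top hE hE_ne
  have hE_mean : ∫ ω, (E ω).toReal ∂μ ≤ 1 := by
    rw [integral_toReal hE hE_lt]
    exact toReal_mono one_ne_top hE1
  have hF : 0 ≤ f 1 - F := sub_nonneg.2 (integral_zero_one_le_apply_one hm hf)
  calc F
      ≤ f 1 - (∫ ω, (E ω).toReal ∂μ) * (f 1 - F) := by
        linarith [mul_le_of_le_one_left hF hE_mean]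
    _ = ∫ ω, (f 1 - (E ω).toReal * (f 1 - F)) ∂μ := by
        rw [integral_sub (integrable_const _) (hE_int.mul_const _), integral_mul_const,
          integral_const, probReal_univ, one_smul]
    _ ≤ ∫ ω, f (min (2 * E ω)⁻¹ 1).toReal ∂μ := by
        refine integral_mono_ae ((integrable_const _).sub (hE_int.mul_const _)) hfP ?_
        filter_upwards [hE_lt] with ω hω
        exact sub_mul_le_apply_min_inv_two_mul hm hc hf hω.ne

/-- **Theorem (e-to-p* calibration).** For every e-variable `E` (a nonnegative random
variable, possibly `∞`, with `E[E] ≤ 1`), the random variable `P = min (1/(2E)) 1` is a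
p*-variable (with the convention `1/(2E) = ∞` when `E = 0`). -/
theorem min_inv_two_e_is_pStarVar
    {Ω : Type*} [MeasurableSpace Ω] (μ : Measure Ω) [IsProbabilityMeasure μ]
    (E : Ω → ℝ≥0∞) (hE : Measurable E) (hE1 : ∫⁻ ω, E ω ∂μ ≤ 1) :
    IsPStarVar μ (fun ω => (min (2 * E ω)⁻¹ 1).toReal) :=
  fun _ hm hc hf hfP => min_inv_two_e_is_pStarVar_general hE.aemeasurable hE1
    (hm.monotoneOn _) (hc.subset (Set.subset_univ _) (convex_Ioi 0)) hf hfP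
end

section
/- Let g : [0,∞] → [0,1] be any e-to-p* calibrator, i.e., a decreasing function such that g(E) is a p*-variable for every e-variable E. Then for every e ∈ [0,∞] with g(e) < 1/2, one has g(e) ≥ 1/(2e). Hence the e-to-p* calibrator e ↦ min(1/(2e), 1) essentially dominates all other e-to-p* calibrators. -/
open MeasureTheory ProbabilityTheory ENNReal

/-!
Let `q` be the probability of the event `P ≤ p`. Testing the p*-property against the increasing
concave function `x ↦ -(c - x)⁺` bounds `E[(c - P)⁺]` by `c² / 2`, and Markov's inequality for
`(c - P)⁺` gives `(c - p) q ≤ c² / 2`. The choice `c = q` yields `q ≤ 2p`. For a calibrator `g`, an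
e-variable equal to `e` with probability `min 1 e⁻¹` and to `0` otherwise therefore forces
`min 1 e⁻¹ ≤ 2 g e`, and the minimum is `e⁻¹` as soon as `g e < 1/2`.
-/

open scoped NNReal

lemma integral_max_sub_zero {a b c : ℝ} (hac : a ≤ c) (hcb : c ≤ b) :
    ∫ u in a..b, max (c - u) 0 = (c - a) ^ 2 / 2 := by
  have hcont : Continuous fun u : ℝ => max (c - u) 0 := by fun_prop
  have hleft : ∫ u in a..c, max (c - u) 0 = ∫ u in a..c, (c - u) := by
    refine intervalIntegral.integral_congr fun u hu => ?_
    rw [Set.uIcc_of_le hac] at hu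
    exact max_eq_left (sub_nonneg.2 hu.2)
  have hright : ∫ u in c..b, max (c - u) 0 = ∫ _ in c..b, 0 := by
    refine intervalIntegral.integral_congr fun u hu => ?_
    rw [Set.uIcc_of_le hcb] at hu
    exact max_eq_right (sub_nonpos.2 hu.1)
  rw [← intervalIntegral.integral_add_adjacent_intervals
    (hcont.intervalIntegrable a c) (hcont.intervalIntegrable c b), hleft, hright,
    intervalIntegral.integral_comp_sub_left (fun x => x), integral_id,
    intervalIntegral.integral_zero]
  ring

section IsPStarVar

variable {Ω : Type*} [MeasurableSpace Ω] {μ : Measure Ω} {P : Ω → ℝ}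

lemma IsPStarVar.integral_max_sub_zero_le [IsFiniteMeasure μ] (hP : IsPStarVar μ P)
    (hint : Integrable P μ) {c : ℝ} (hc₀ : 0 ≤ c) (hc₁ : c ≤ 1) :
    ∫ ω, max (c - P ω) 0 ∂μ ≤ c ^ 2 / 2 := by
  have hmono : Monotone fun x : ℝ => -max (c - x) 0 := fun x y hxy =>
    neg_le_neg (max_le_max_right 0 (sub_le_sub_left hxy c))
  have hconc : ConcaveOn ℝ Set.univ fun x : ℝ => -max (c - x) 0 :=
    (((convexOn_const c convex_univ).sub (concaveOn_id convex_univ)).sup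
      (convexOn_const 0 convex_univ)).neg
  have htest := hP _ hmono hconc (Continuous.intervalIntegrable (by fun_prop) 0 1)
    ((integrable_const c).sub hint).pos_part.neg
  rwa [intervalIntegral.integral_neg, integral_neg, neg_le_neg_iff,
    integral_max_sub_zero hc₀ hc₁, sub_zero] at htest

lemma IsPStarVar.measure_le_le_ofReal_two_mul [IsProbabilityMeasure μ] (hP : IsPStarVar μ P)
    (hint : Integrable P μ) (p : ℝ) : μ {ω | P ω ≤ p} ≤ ENNReal.ofReal (2 * p) := by
  set q := μ.real {ω | P ω ≤ p} with hq
  have hq₀ : 0 ≤ q := measureReal_nonneg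
  rw [← ofReal_measureReal, ← hq]
  rcases hq₀.eq_or_lt with hzero | hpos
  · simp [← hzero]
  refine ofReal_le_ofReal ?_
  rcases le_or_gt q p with hqp | hpq
  · linarith
  have hset : {ω | q - p ≤ max (q - P ω) 0} = {ω | P ω ≤ p} := by
    ext ω
    have hle : q - p ≤ q - P ω ↔ P ω ≤ p := sub_le_sub_iff_left q
    simp only [Set.mem_ofPred_eq, le_max_iff, sub_nonpos, hpq.not_ge, or_false, hle]
  have hmarkov : (q - p) * q ≤ q ^ 2 / 2 :=
    calc (q - p) * q = (q - p) * μ.real {ω | q - p ≤ max (q - P ω) 0} := by rw [hset]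
      _ ≤ ∫ ω, max (q - P ω) 0 ∂μ :=
        mul_meas_ge_le_integral_of_nonneg (ae_of_all _ fun _ => le_max_right _ _)
          ((integrable_const q).sub hint).pos_part _
      _ ≤ q ^ 2 / 2 := hP.integral_max_sub_zero_le hint hq₀ measureReal_le_one
  nlinarith

end IsPStarVar

lemma exists_measurableSet_measure_eq_of_forall_exists_map_eq {Ω β : Type*} [MeasurableSpace Ω]
    [MeasurableSpace β] [MeasurableSingletonClass β] [Nontrivial β] {μ : Measure Ω}
    (hrich : ∀ ν : Measure β, IsProbabilityMeasure ν → ∃ X : Ω → β, Measurable X ∧ μ.map X = ν)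
    {q : ℝ≥0∞} (hq : q ≤ 1) : ∃ A : Set Ω, MeasurableSet A ∧ μ A = q := by
  obtain ⟨x, y, hxy⟩ := exists_pair_ne β
  obtain ⟨X, hX, hmap⟩ := hrich (q • Measure.dirac x + (1 - q) • Measure.dirac y)
    ⟨by simp [add_tsub_cancel_of_le hq]⟩
  refine ⟨X ⁻¹' {x}, hX (measurableSet_singleton x), ?_⟩
  rw [← Measure.map_apply hX (measurableSet_singleton x), hmap]
  simp [hxy.symm]

lemma measure_le_ofReal_two_mul_calibrator {Ω : Type*} [MeasurableSpace Ω] {μ : Measure Ω}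
    [IsProbabilityMeasure μ] {g : ℝ≥0∞ → ℝ}
    (hcal : ∀ E : Ω → ℝ≥0∞, Measurable E → ∫⁻ ω, E ω ∂μ ≤ 1 → IsPStarVar μ (fun ω => g (E ω)))
    {A : Set Ω} (hA : MeasurableSet A) {e : ℝ≥0∞} (he : e * μ A ≤ 1) :
    μ A ≤ ENNReal.ofReal (2 * g e) := by
  let E : SimpleFunc Ω ℝ≥0∞ := (SimpleFunc.const Ω e).restrict A
  have hE : ∫⁻ ω, E ω ∂μ ≤ 1 := by
    rwa [E.lintegral_eq_lintegral μ, SimpleFunc.restrict_const_lintegral _ hA]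
  have hsub : A ⊆ {ω | g (E ω) ≤ g e} := fun ω hω => by
    simp [E, SimpleFunc.restrict_apply _ hA, hω]
  exact (measure_mono hsub).trans <|
    (hcal E E.measurable hE).measure_le_le_ofReal_two_mul
      (E.map g).integrable_of_isFiniteMeasure (g e)

theorem e_to_pStar_calibrator_essential_domination_general
    {Ω : Type*} [MeasurableSpace Ω] (μ : Measure Ω) [IsProbabilityMeasure μ]
    (hrich : ∀ q : ℝ≥0∞, q ≤ 1 → ∃ A : Set Ω, MeasurableSet A ∧ μ A = q)
    (g : ℝ≥0∞ → ℝ≥0)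
    (hcal : ∀ E : Ω → ℝ≥0∞, Measurable E → ∫⁻ ω, E ω ∂μ ≤ 1 →
      IsPStarVar μ (fun ω => (g (E ω) : ℝ))) :
    ∀ e : ℝ≥0∞, g e < 1 / 2 → (2 * e)⁻¹ ≤ g e := by
  intro e he
  obtain ⟨A, hA, hμA⟩ := hrich (min 1 e⁻¹) (min_le_left _ _)
  have hmean : e * μ A ≤ 1 :=
    calc e * μ A ≤ e * e⁻¹ := by gcongr; exact hμA.trans_le (min_le_right _ _)
      _ ≤ 1 := ENNReal.mul_inv_le_one e
  have hmin : min 1 e⁻¹ ≤ 2 * (g e : ℝ≥0∞) := by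
    have hbound := measure_le_ofReal_two_mul_calibrator (g := fun x => (g x : ℝ)) hcal hA hmean
    rwa [hμA, ofReal_mul zero_le_two, ofReal_ofNat, ofReal_coe_nnreal] at hbound
  have hlt : 2 * (g e : ℝ≥0∞) < 1 := by
    rw [lt_div_iff₀' two_pos] at he
    exact_mod_cast he
  have hinv : e⁻¹ ≤ 2 * (g e : ℝ≥0∞) := (min_le_iff.1 hmin).resolve_left hlt.not_ge
  rwa [ENNReal.mul_inv (by simp) (by simp), ENNReal.inv_mul_le_iff two_ne_zero ofNat_ne_top]

/-- **Theorem.** On a probability space rich enough to support an e-variable with any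
prescribed distribution, every e-to-p* calibrator `g` (a decreasing `[0,1]`-valued function
on `[0,∞]` such that `g ∘ E` is a p*-variable for every e-variable `E`) satisfies
`g e ≥ 1/(2e)` whenever `g e < 1/2`.  Hence the e-to-p* calibrator `e ↦ min (1/(2e)) 1`
essentially dominates all other e-to-p* calibrators. -/
theorem e_to_pStar_calibrator_essential_domination
    {Ω : Type*} [MeasurableSpace Ω] (μ : Measure Ω) [IsProbabilityMeasure μ]
    (hrich : ∀ ν : Measure ℝ≥0∞, IsProbabilityMeasure ν →
      ∃ E : Ω → ℝ≥0∞, Measurable E ∧ μ.map E = ν)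
    (g : ℝ≥0∞ → ℝ) (hg : Antitone g) (hg01 : ∀ e, g e ∈ Set.Icc (0:ℝ) 1)
    (hcal : ∀ E : Ω → ℝ≥0∞, Measurable E → ∫⁻ ω, E ω ∂μ ≤ 1 →
      IsPStarVar μ (fun ω => g (E ω))) :
    ∀ e : ℝ≥0∞, g e < 1/2 → (2 * e)⁻¹ ≤ ENNReal.ofReal (g e) := by
  lift g to ℝ≥0∞ → ℝ≥0 using fun e => (hg01 e).1
  simpa [← NNReal.coe_lt_coe] using e_to_pStar_calibrator_essential_domination_general μ
    (fun _ => exists_measurableSet_measure_eq_of_forall_exists_map_eq hrich) g hcal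
end

section
/- Let E be an e-variable such that E ≤₁ E' (E is first-order stochastically smaller than E') for some e-variable E' whose distribution has a decreasing density function on (0,∞). Then P := min(1/(2E), 1) is a p-variable: ℙ(P ≤ α) ≤ α for all α ∈ (0,1), equivalently ℙ(2E ≥ 1/α) ≤ α for all α ∈ (0,1). -/
open MeasureTheory ProbabilityTheory

/-!
If `f` is antitone on `(0, ∞)`, the reflection `x ↦ 2t - x` about `t` gives
`∫_t^{2t} (2t - x) f(x) dx = ∫_0^t y f(2t - y) dy ≤ ∫_0^t y f(y) dy`. Since
`2t ≤ x + max(2t - x, 0)`, integrating against `f` over `(t, ∞)` improves Markov's inequality to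
`2t ∫_t^∞ f ≤ ∫_0^∞ x f(x) dx`. Hence `ℙ(E' ≥ t) ≤ 1 / (2t)`, and stochastic dominance transfers
this tail bound to `E`.
-/

open Set
open scoped ENNReal

section AntitoneDensity

variable {f : ℝ → ℝ≥0∞} {t : ℝ}

lemma setLIntegral_Ioi_two_mul_sub_mul_le (hf : AntitoneOn f (Ioi 0)) :
    ∫⁻ x in Ioi t, ENNReal.ofReal (2 * t - x) * f x ≤
      ∫⁻ y in Ioc 0 t, ENNReal.ofReal y * f y := by
  have hpreimage : (fun y ↦ 2 * t - y) ⁻¹' Ioi t = Iio t := by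
    ext y
    simp only [mem_preimage, mem_Ioi, mem_Iio]
    constructor <;> intro <;> linarith
  calc
    ∫⁻ x in Ioi t, ENNReal.ofReal (2 * t - x) * f x
        = ∫⁻ y in Iio t, ENNReal.ofReal y * f (2 * t - y) := by
      rw [← (volume.measurePreserving_sub_left (2 * t)).setLIntegral_comp_preimage_emb
        (MeasurableEquiv.subLeft (2 * t)).measurableEmbedding, hpreimage]
      simp only [sub_sub_cancel]
    _ ≤ ∫⁻ y in Iio t, (Ioc 0 t).indicator (fun y ↦ ENNReal.ofReal y * f y) y := by
      refine setLIntegral_mono' measurableSet_Iio fun y (hyt : y < t) ↦ ?_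
      rcases le_or_gt y 0 with hy | hy
      · simp [ENNReal.ofReal_of_nonpos hy]
      · rw [indicator_of_mem (show y ∈ Ioc 0 t from ⟨hy, hyt.le⟩)]
        gcongr
        exact hf hy (mem_Ioi.2 (by linarith)) (by linarith)
    _ ≤ ∫⁻ y in Ioc 0 t, ENNReal.ofReal y * f y :=
      (setLIntegral_le_lintegral _ _).trans (lintegral_indicator_le _ _)

lemma two_mul_setLIntegral_Ioi_le (hf : AntitoneOn f (Ioi 0)) (ht : 0 ≤ t) :
    ENNReal.ofReal (2 * t) * ∫⁻ x in Ioi t, f x ≤ ∫⁻ x in Ioi 0, ENNReal.ofReal x * f x := by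
  have hfm : AEMeasurable f (volume.restrict (Ioi t)) :=
    aemeasurable_restrict_of_antitoneOn measurableSet_Ioi (hf.mono (Ioi_subset_Ioi ht))
  calc
    ENNReal.ofReal (2 * t) * ∫⁻ x in Ioi t, f x
        = ∫⁻ x in Ioi t, ENNReal.ofReal (2 * t) * f x := (lintegral_const_mul'' _ hfm).symm
    _ ≤ ∫⁻ x in Ioi t, (ENNReal.ofReal (2 * t - x) * f x + ENNReal.ofReal x * f x) := by
      refine lintegral_mono fun x ↦ ?_
      rw [← add_mul]
      gcongr
      simpa using ENNReal.ofReal_add_le (p := 2 * t - x) (q := x)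
    _ = (∫⁻ x in Ioi t, ENNReal.ofReal (2 * t - x) * f x) +
        ∫⁻ x in Ioi t, ENNReal.ofReal x * f x :=
      lintegral_add_left' (by fun_prop) _
    _ ≤ (∫⁻ x in Ioc 0 t, ENNReal.ofReal x * f x) + ∫⁻ x in Ioi t, ENNReal.ofReal x * f x :=
      add_le_add (setLIntegral_Ioi_two_mul_sub_mul_le hf) le_rfl
    _ = ∫⁻ x in Ioi 0, ENNReal.ofReal x * f x := by
      rw [← lintegral_union measurableSet_Ioi Ioc_disjoint_Ioi_same, Ioc_union_Ioi_eq_Ioi ht]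

end AntitoneDensity

/-- A measure on `ℝ` has a decreasing density on `(0, ∞)` with respect to Lebesgue measure.
Nothing is required of its mass on `(-∞, 0]`; in particular an atom at `0` is allowed. -/
def HasAntitoneDensityOnIoi (ρ : Measure ℝ) : Prop :=
  ∃ f : ℝ → ℝ≥0∞, AntitoneOn f (Ioi 0) ∧
    ρ.restrict (Ioi 0) = (volume.restrict (Ioi 0)).withDensity f

namespace HasAntitoneDensityOnIoi

variable {ρ : Measure ℝ}

lemma of_setIntegral {h : ℝ → ℝ} (hmono : AntitoneOn h (Ioi 0)) (hnonneg : ∀ x ∈ Ioi 0, 0 ≤ h x)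
    (hρ : ∀ s, MeasurableSet s → s ⊆ Ioi 0 → ρ s = ENNReal.ofReal (∫ x in s, h x)) :
    HasAntitoneDensityOnIoi ρ := by
  by_cases hint : IntegrableOn h (Ioi 0)
  · refine ⟨fun x ↦ ENNReal.ofReal (h x), ENNReal.ofReal_mono.comp_antitoneOn hmono, ?_⟩
    ext s hs
    have hs' : MeasurableSet (s ∩ Ioi 0) := hs.inter measurableSet_Ioi
    rw [Measure.restrict_apply hs, withDensity_apply _ hs, Measure.restrict_restrict hs,
      hρ _ hs' inter_subset_right,
      ofReal_integral_eq_lintegral_ofReal (hint.mono_set inter_subset_right)]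
    exact (ae_restrict_mem hs').mono fun x hx ↦ hnonneg x hx.2
  · -- The Bochner integral of `h` over `(0, ∞)` is then `0`, so `ρ` has no mass there.
    refine ⟨0, antitoneOn_const, ?_⟩
    rw [withDensity_zero, Measure.restrict_eq_zero, hρ _ measurableSet_Ioi subset_rfl,
      integral_undef hint, ENNReal.ofReal_zero]

lemma two_mul_measure_Ici_le_lintegral (hρ : HasAntitoneDensityOnIoi ρ) {t : ℝ} (ht : 0 < t) :
    ENNReal.ofReal (2 * t) * ρ (Ici t) ≤ ∫⁻ x, ENNReal.ofReal x ∂ρ := by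
  obtain ⟨f, hf, hdens⟩ := hρ
  have htail : ρ (Ici t) = ∫⁻ x in Ioi t, f x := by
    have hsub : Ici t ⊆ Ioi 0 := Ici_subset_Ioi.2 ht
    rw [← Measure.restrict_eq_self ρ hsub, hdens, withDensity_apply _ measurableSet_Ici,
      Measure.restrict_restrict_of_subset hsub, setLIntegral_congr Ioi_ae_eq_Ici]
  calc
    ENNReal.ofReal (2 * t) * ρ (Ici t)
        ≤ ∫⁻ x in Ioi 0, ENNReal.ofReal x * f x := htail ▸ two_mul_setLIntegral_Ioi_le hf ht.le
    _ = ∫⁻ x in Ioi 0, ENNReal.ofReal x ∂ρ := by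
      rw [hdens, lintegral_withDensity_eq_lintegral_mul₀
        (aemeasurable_restrict_of_antitoneOn measurableSet_Ioi hf) (by fun_prop)]
      simp only [Pi.mul_apply, mul_comm]
    _ ≤ ∫⁻ x, ENNReal.ofReal x ∂ρ := setLIntegral_le_lintegral _ _

end HasAntitoneDensityOnIoi

section StochasticOrder

variable {Ω Ω' β : Type*} [MeasurableSpace Ω] [MeasurableSpace Ω'] [Preorder β] {s : Set β}

lemma monotone_indicator_const_of_isUpperSet {M : Type*} [Preorder M] [Zero M] {c : M}
    (hc : 0 ≤ c) (hs : IsUpperSet s) : Monotone (s.indicator fun _ ↦ c) := by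
  intro a b hab
  by_cases ha : a ∈ s
  · simp only [indicator_of_mem ha, indicator_of_mem (hs hab ha), le_refl]
  · rw [indicator_of_notMem ha]
    exact indicator_apply_nonneg fun _ ↦ hc

/-- First-order stochastic dominance `X ≤₁ Y`, where `X` and `Y` may live on different spaces, with
measures `μ` and `ν` respectively. -/
def StochasticallyLE (X : Ω → β) (Y : Ω' → β) (μ : Measure Ω) (ν : Measure Ω') : Prop :=
  ∀ g : β → ℝ, Monotone g → Integrable (fun ω ↦ g (X ω)) μ → Integrable (fun ω ↦ g (Y ω)) ν →
    ∫ ω, g (X ω) ∂μ ≤ ∫ ω, g (Y ω) ∂ν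

lemma StochasticallyLE.measure_preimage_le [MeasurableSpace β] {μ : Measure Ω} {ν : Measure Ω'}
    [IsFiniteMeasure μ] [IsFiniteMeasure ν] {X : Ω → β} {Y : Ω' → β}
    (hXY : StochasticallyLE X Y μ ν) (hX : Measurable X) (hY : Measurable Y)
    (hs : IsUpperSet s) (hsm : MeasurableSet s) :
    μ (X ⁻¹' s) ≤ ν (Y ⁻¹' s) := by
  have hdom : ∫ ω, (X ⁻¹' s).indicator 1 ω ∂μ ≤ ∫ ω, (Y ⁻¹' s).indicator 1 ω ∂ν :=
    hXY _ (monotone_indicator_const_of_isUpperSet zero_le_one hs)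
      ((integrable_const 1).indicator (hX hsm)) ((integrable_const 1).indicator (hY hsm))
  rw [integral_indicator_one (hX hsm), integral_indicator_one (hY hsm)] at hdom
  exact (ENNReal.toReal_le_toReal (measure_ne_top _ _) (measure_ne_top _ _)).1 hdom

end StochasticOrder

theorem min_inv_two_e_is_pVar_of_decreasing_density_dominating_general
    {Ω Ω' : Type*} [MeasurableSpace Ω] [MeasurableSpace Ω'] {μ : Measure Ω} {ν : Measure Ω'}
    [IsFiniteMeasure μ] [IsFiniteMeasure ν] {E : Ω → ℝ} {E' : Ω' → ℝ}
    (hE : Measurable E) (hE' : Measurable E') (hmean : ∫⁻ ω, ENNReal.ofReal (E' ω) ∂ν ≤ 1)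
    (hle : StochasticallyLE E E' μ ν) (hdens : HasAntitoneDensityOnIoi (ν.map E'))
    {α : ℝ} (hα : 0 < α) :
    μ {ω | 1 / α ≤ 2 * E ω} ≤ ENNReal.ofReal α := by
  have ht : 0 < (2 * α)⁻¹ := by positivity
  have htail_set : {ω | 1 / α ≤ 2 * E ω} = E ⁻¹' Ici (2 * α)⁻¹ := by
    ext ω
    rw [mem_ofPred_eq, mem_preimage, mem_Ici, one_div, mul_inv, inv_mul_le_iff₀ two_pos]
  have hmarkov : ENNReal.ofReal α⁻¹ * ν.map E' (Ici (2 * α)⁻¹) ≤ 1 := by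
    calc
      ENNReal.ofReal α⁻¹ * ν.map E' (Ici (2 * α)⁻¹)
          = ENNReal.ofReal (2 * (2 * α)⁻¹) * ν.map E' (Ici (2 * α)⁻¹) := by
        rw [mul_inv, mul_inv_cancel_left₀ two_ne_zero]
      _ ≤ ∫⁻ x, ENNReal.ofReal x ∂ν.map E' := hdens.two_mul_measure_Ici_le_lintegral ht
      _ = ∫⁻ ω, ENNReal.ofReal (E' ω) ∂ν := lintegral_map ENNReal.measurable_ofReal hE'
      _ ≤ 1 := hmean
  calc
    μ {ω | 1 / α ≤ 2 * E ω} = μ (E ⁻¹' Ici (2 * α)⁻¹) := by rw [htail_set]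
    _ ≤ ν (E' ⁻¹' Ici (2 * α)⁻¹) :=
      hle.measure_preimage_le hE hE' (isUpperSet_Ici _) measurableSet_Ici
    _ = ν.map E' (Ici (2 * α)⁻¹) := (Measure.map_apply hE' measurableSet_Ici).symm
    _ ≤ (ENNReal.ofReal α⁻¹)⁻¹ := ENNReal.le_inv_iff_mul_le.2 (by rwa [mul_comm])
    _ = ENNReal.ofReal α := by rw [ENNReal.ofReal_inv_of_pos hα, inv_inv]

/-- **Proposition.** Let `E` be an e-variable that is first-order stochastically smaller
than some e-variable `E'` whose distribution has a decreasing density on `(0,∞)` (condition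
(D')).  Then `P = min (1/(2E)) 1` is a p-variable, equivalently `ℙ(2E ≥ 1/α) ≤ α` for all
`α ∈ (0,1)`. -/
theorem min_inv_two_e_is_pVar_of_decreasing_density_dominating
    {Ω : Type*} [MeasurableSpace Ω] (μ : Measure Ω) [IsProbabilityMeasure μ]
    (E E' : Ω → ℝ) (hEm : Measurable E) (hE'm : Measurable E')
    (hE0 : ∀ᵐ ω ∂μ, 0 ≤ E ω) (hE'0 : ∀ᵐ ω ∂μ, 0 ≤ E' ω)
    (hEint : Integrable E μ) (hE'int : Integrable E' μ)
    (hEe : ∫ ω, E ω ∂μ ≤ 1) (hE'e : ∫ ω, E' ω ∂μ ≤ 1)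
    (hst : ∀ f : ℝ → ℝ, Monotone f → Integrable (fun ω => f (E ω)) μ →
      Integrable (fun ω => f (E' ω)) μ → ∫ ω, f (E ω) ∂μ ≤ ∫ ω, f (E' ω) ∂μ)
    (h : ℝ → ℝ) (hhm : Measurable h) (hmono : AntitoneOn h (Set.Ioi 0))
    (hh0 : ∀ x ∈ Set.Ioi (0:ℝ), 0 ≤ h x)
    (hdens : ∀ s : Set ℝ, MeasurableSet s → s ⊆ Set.Ioi 0 →
      μ.map E' s = ENNReal.ofReal (∫ x in s, h x)) :
    ∀ α ∈ Set.Ioo (0:ℝ) 1, μ {ω | 1/α ≤ 2 * E ω} ≤ ENNReal.ofReal α :=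
  fun _ hα ↦ min_inv_two_e_is_pVar_of_decreasing_density_dominating_general hEm hE'm
    (by simpa [← ofReal_integral_eq_lintegral_ofReal hE'int hE'0] using hE'e) hst
    (.of_setIntegral hmono hh0 hdens) hα.1
end
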